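/- Let θ : ℝⁿ → [−∞,+∞] be symmetric and locally Lipschitz continuous relative to its domain, and let the spectral function g = θ∘λ be lower semicontinuous. Let (X,Y) ∈ gph ∂̂g with Y = U·Diag(y)·Uᵀ for some y ∈ ∂̂θ(λ(X)) and U ∈ Oⁿ(X). Then g is twice epi-differentiable at X for Y if and only if θ is twice epi-differentiable at λ(X) for y. -/

import Mathlib

open Filter Topology Matrix

noncomputable section

namespace SpecPaper

/-! ## Generic variational analysis definitions over a topological real vector space -/

variable {E : Type*}

section Generic

variable [AddCommGroup E] [Module ℝ E] [TopologicalSpace E]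

/-- `f x` is finite (neither `+∞` nor `-∞`). -/
def IsFiniteAt (f : E → EReal) (x : E) : Prop :=
  f x ≠ ⊤ ∧ f x ≠ ⊥

/-- The norm induced by a given inner product. -/
noncomputable def nrm (ip : E → E → ℝ) (x : E) : ℝ :=
  Real.sqrt (ip x x)

/-- The subderivative `df(x)(w)`. -/
noncomputable def subderiv (f : E → EReal) (x w : E) : EReal :=
  Filter.liminf (fun p : ℝ × E => (((p.1)⁻¹ : ℝ) : EReal) * (f (x + p.1 • p.2) - f x))
    ((nhdsWithin (0 : ℝ) (Set.Ioi 0)) ×ˢ nhds w)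

/-- The second-order difference quotient `Δ²ₜ f(x,v)(w)`. -/
noncomputable def sdq2 (ip : E → E → ℝ) (f : E → EReal) (x v : E) (t : ℝ) (w : E) : EReal :=
  (((2 / t ^ 2) : ℝ) : EReal) * (f (x + t • w) - f x - ((t * ip v w : ℝ) : EReal))

/-- The second subderivative `d²f(x,v)(w)`. -/
noncomputable def subderiv2 (ip : E → E → ℝ) (f : E → EReal) (x v w : E) : EReal :=
  Filter.liminf (fun p : ℝ × E => sdq2 ip f x v p.1 p.2)
    ((nhdsWithin (0 : ℝ) (Set.Ioi 0)) ×ˢ nhds w)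

/-- Twice epi-differentiability of `f` at `x` for `v`. -/
def TwiceEpiDiff (ip : E → E → ℝ) (f : E → EReal) (x v : E) : Prop :=
  IsFiniteAt f x ∧
    ∀ t : ℕ → ℝ, (∀ k, 0 < t k) → Tendsto t atTop (nhds 0) →
      ∀ w : E, ∃ ws : ℕ → E, Tendsto ws atTop (nhds w) ∧
        Tendsto (fun k => sdq2 ip f x v (t k) (ws k)) atTop (nhds (subderiv2 ip f x v w))

/-- `v` is a regular subgradient of `f` at `x`. -/
def RegSubgrad (ip : E → E → ℝ) (f : E → EReal) (x v : E) : Prop :=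
  IsFiniteAt f x ∧
    (0 : EReal) ≤ Filter.liminf
      (fun y : E =>
        (((nrm ip (y - x))⁻¹ : ℝ) : EReal) * (f y - f x - ((ip v (y - x) : ℝ) : EReal)))
      (nhdsWithin x {x}ᶜ)

/-- `v` is a (limiting) subgradient of `f` at `x`. -/
def LimSubgrad (ip : E → E → ℝ) (f : E → EReal) (x v : E) : Prop :=
  ∃ xs vs : ℕ → E, (∀ k, RegSubgrad ip f (xs k) (vs k)) ∧
    Tendsto xs atTop (nhds x) ∧ Tendsto vs atTop (nhds v) ∧
    Tendsto (fun k => f (xs k)) atTop (nhds (f x))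

/-- The tangent cone to `C` at `x`. -/
def tangentCone (C : Set E) (x : E) : Set E :=
  {w | ∃ (t : ℕ → ℝ) (ws : ℕ → E), (∀ k, 0 < t k) ∧ Tendsto t atTop (nhds 0) ∧
    Tendsto ws atTop (nhds w) ∧ ∀ k, x + t k • ws k ∈ C}

/-- The regular normal cone to `C` at `x`. -/
def regNormalCone (ip : E → E → ℝ) (C : Set E) (x : E) : Set E :=
  {v | ∀ w ∈ tangentCone C x, ip v w ≤ 0}

/-- The limiting normal cone to `C` at `x`. -/
def limNormalCone (ip : E → E → ℝ) (C : Set E) (x : E) : Set E :=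
  {v | ∃ xs vs : ℕ → E, (∀ k, xs k ∈ C) ∧ (∀ k, vs k ∈ regNormalCone ip C (xs k)) ∧
    Tendsto xs atTop (nhds x) ∧ Tendsto vs atTop (nhds v)}

/-- The critical cone `C_f(x,v)`. -/
def criticalCone (ip : E → E → ℝ) (f : E → EReal) (x v : E) : Set E :=
  {w | subderiv f x w = ((ip v w : ℝ) : EReal)}

/-- `f` is locally Lipschitz continuous at `x` relative to its domain. -/
def LocLipAtRelDom (ip : E → E → ℝ) (f : E → EReal) (x : E) : Prop :=
  IsFiniteAt f x ∧
    ∃ V ∈ nhds x, ∃ ℓ : ℝ, 0 ≤ ℓ ∧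
      ∀ a ∈ V, ∀ b ∈ V, f a ≠ ⊤ → f b ≠ ⊤ →
        f a ≠ ⊥ ∧ f b ≠ ⊥ ∧ |(f a).toReal - (f b).toReal| ≤ ℓ * nrm ip (a - b)

/-- `f` is locally Lipschitz continuous relative to its domain. -/
def LocLipRelDom (ip : E → E → ℝ) (f : E → EReal) : Prop :=
  ∀ x : E, f x ≠ ⊤ → LocLipAtRelDom ip f x

/-- `v` is a proximal subgradient of `f` at `x`. -/
def ProxSubgrad (ip : E → E → ℝ) (f : E → EReal) (x v : E) : Prop :=
  IsFiniteAt f x ∧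
    ∃ r > (0 : ℝ), ∃ ε > (0 : ℝ), ∀ x' : E, nrm ip (x' - x) ≤ ε →
      f x + ((ip v (x' - x) - r / 2 * ip (x' - x) (x' - x) : ℝ) : EReal) ≤ f x'

/-- `f` is prox-regular at `x` for `v`. -/
def ProxRegularAtFor (ip : E → E → ℝ) (f : E → EReal) (x v : E) : Prop :=
  IsFiniteAt f x ∧
    (∃ δ > (0 : ℝ), LowerSemicontinuousOn f {x' | nrm ip (x' - x) < δ}) ∧
    ∃ ε > (0 : ℝ), ∃ r : ℝ, 0 ≤ r ∧
      ∀ x₁ v₁ : E, LimSubgrad ip f x₁ v₁ → nrm ip (x₁ - x) < ε → nrm ip (v₁ - v) < ε →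
        f x₁ < f x + (ε : EReal) →
        ∀ x' : E, nrm ip (x' - x) < ε →
          f x₁ + ((ip v₁ (x' - x₁) - r / 2 * ip (x' - x₁) (x' - x₁) : ℝ) : EReal) ≤ f x'

/-- `f` is prox-regular at `x` (for every subgradient). -/
def ProxRegularAt (ip : E → E → ℝ) (f : E → EReal) (x : E) : Prop :=
  ∀ v : E, LimSubgrad ip f x v → ProxRegularAtFor ip f x v

/-- `f` is subdifferentially continuous at `x`. -/
def SubdiffContAt (ip : E → E → ℝ) (f : E → EReal) (x : E) : Prop :=
  ∀ v : E, LimSubgrad ip f x v →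
    ∀ xs vs : ℕ → E, (∀ k, LimSubgrad ip f (xs k) (vs k)) →
      Tendsto xs atTop (nhds x) → Tendsto vs atTop (nhds v) →
      Tendsto (fun k => f (xs k)) atTop (nhds (f x))

/-- `f` is prox-bounded. -/
def ProxBounded (ip : E → E → ℝ) (f : E → EReal) : Prop :=
  ∃ α c : ℝ, ∀ x : E, (c : EReal) ≤ f x + ((α * ip x x : ℝ) : EReal)

/-- The proximal mapping (as a set of minimizers). -/
def proxSet (ip : E → E → ℝ) (f : E → EReal) (γ : ℝ) (x : E) : Set E :=
  {w | ∀ w' : E,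
    f w + ((1 / (2 * γ) * ip (w - x) (w - x) : ℝ) : EReal) ≤
      f w' + ((1 / (2 * γ) * ip (w' - x) (w' - x) : ℝ) : EReal)}

/-- The proximal map of `f` with parameter `γ` is single-valued around `z` and the resulting
map is directionally differentiable at `z`. -/
def ProxSingleDirDiff (ip : E → E → ℝ) (f : E → EReal) (γ : ℝ) (z : E) : Prop :=
  ∃ V ∈ nhds z, ∃ P : E → E, (∀ u ∈ V, proxSet ip f γ u = {P u}) ∧
    ∀ h : E, ∃ L : E,
      Tendsto (fun t : ℝ => t⁻¹ • (P (z + t • h) - P z)) (nhdsWithin 0 (Set.Ioi 0)) (nhds L)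

/-- The parabolic difference quotient. -/
noncomputable def parabQuot (f : E → EReal) (x w : E) (t : ℝ) (z : E) : EReal :=
  (((2 / t ^ 2) : ℝ) : EReal) *
    (f (x + t • w + (t ^ 2 / 2) • z) - f x - ((t * (subderiv f x w).toReal : ℝ) : EReal))

/-- The parabolic subderivative `d²f(x)(w | z)`. -/
noncomputable def parabSubderiv (f : E → EReal) (x w z : E) : EReal :=
  Filter.liminf (fun p : ℝ × E => parabQuot f x w p.1 p.2)
    ((nhdsWithin (0 : ℝ) (Set.Ioi 0)) ×ˢ nhds z)

/-- `f` is parabolically epi-differentiable at `x` for `w`. -/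
def ParabEpiDiff (f : E → EReal) (x w : E) : Prop :=
  (∃ z : E, parabSubderiv f x w z < ⊤) ∧
    ∀ t : ℕ → ℝ, (∀ k, 0 < t k) → Tendsto t atTop (nhds 0) →
      ∀ z : E, ∃ zs : ℕ → E, Tendsto zs atTop (nhds z) ∧
        Tendsto (fun k => parabQuot f x w (t k) (zs k)) atTop (nhds (parabSubderiv f x w z))

/-- `φ` is a generalized quadratic form: its domain is a linear subspace and on the domain it is
given by a symmetric linear operator. -/
def IsGQF (ip : E → E → ℝ) (φ : E → EReal) : Prop :=
  (φ 0 ≠ ⊤) ∧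
  (∀ x y : E, φ x ≠ ⊤ → φ y ≠ ⊤ → φ (x + y) ≠ ⊤) ∧
  (∀ (c : ℝ) (x : E), φ x ≠ ⊤ → φ (c • x) ≠ ⊤) ∧
  ∃ L : E → E,
    (∀ x y : E, φ x ≠ ⊤ → φ y ≠ ⊤ → L (x + y) = L x + L y) ∧
    (∀ (c : ℝ) (x : E), φ x ≠ ⊤ → L (c • x) = c • L x) ∧
    (∀ x y : E, φ x ≠ ⊤ → φ y ≠ ⊤ → ip (L x) y = ip x (L y)) ∧
    (∀ x : E, φ x ≠ ⊤ → φ x = ((ip (L x) x : ℝ) : EReal))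

/-- `f` is generalized twice differentiable at `x` for `v`. -/
def GenTwiceDiff (ip : E → E → ℝ) (f : E → EReal) (x v : E) : Prop :=
  TwiceEpiDiff ip f x v ∧ IsGQF ip (subderiv2 ip f x v)

/-- Proto-differentiability of a set-valued map `F` at `x` for `y ∈ F x`. -/
def ProtoDiff (F : E → Set E) (x y : E) : Prop :=
  ∀ w η : E, (w, η) ∈ tangentCone {p : E × E | p.2 ∈ F p.1} (x, y) →
    ∀ t : ℕ → ℝ, (∀ k, 0 < t k) → Tendsto t atTop (nhds 0) →
      ∃ ws ηs : ℕ → E, Tendsto ws atTop (nhds w) ∧ Tendsto ηs atTop (nhds η) ∧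
        ∀ k, y + t k • ηs k ∈ F (x + t k • ws k)

/-- Relative interior of a set (interior relative to its affine hull). -/
def relInterior (C : Set E) : Set E :=
  {y | y ∈ C ∧ ∃ V ∈ nhds y, ∀ z ∈ V, z ∈ affineSpan ℝ C → z ∈ C}

/-- A polyhedral set: the intersection of finitely many closed half-spaces. -/
def IsPolyhedral (ip : E → E → ℝ) (C : Set E) : Prop :=
  ∃ (k : ℕ) (a : Fin k → E) (b : Fin k → ℝ), C = {x | ∀ j : Fin k, ip (a j) x ≤ b j}

/-- The subdifferential of a convex function. -/
def convexSubdiff (ip : E → E → ℝ) (f : E → EReal) (x : E) : Set E :=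
  {v | ∀ z : E, f x + ((ip v (z - x) : ℝ) : EReal) ≤ f z}

/-- The natural inner product on `E × ℝ`. -/
def ipProd (ip : E → E → ℝ) : E × ℝ → E × ℝ → ℝ :=
  fun p q => ip p.1 q.1 + p.2 * q.2

/-- The epigraph of `f`. -/
def epiSet (f : E → EReal) : Set (E × ℝ) :=
  {p | f p.1 ≤ (p.2 : EReal)}

/-- `f` is subdifferentially regular at `x`. -/
def SubdiffRegularAt (ip : E → E → ℝ) (f : E → EReal) (x : E) : Prop :=
  IsFiniteAt f x ∧
    regNormalCone (ipProd ip) (epiSet f) (x, (f x).toReal) =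
      limNormalCone (ipProd ip) (epiSet f) (x, (f x).toReal)

/-! Real-valued versions: semidifferentiability, gradients. -/

/-- `f` is semidifferentiable at `x`. -/
def SemiDiffAt (f : E → ℝ) (x : E) : Prop :=
  ∀ w : E, ∃ d : ℝ,
    Tendsto (fun p : ℝ × E => (p.1)⁻¹ * (f (x + p.1 • p.2) - f x))
      ((nhdsWithin (0 : ℝ) (Set.Ioi 0)) ×ˢ nhds w) (nhds d)

/-- The (real value of the) subderivative of a real-valued function. -/
noncomputable def dReal (f : E → ℝ) (x w : E) : ℝ :=
  (subderiv (fun y => ((f y : ℝ) : EReal)) x w).toReal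

/-- The second-order difference quotient built from the subderivative. -/
noncomputable def sdq2R (f : E → ℝ) (x : E) (t : ℝ) (w : E) : ℝ :=
  (2 / t ^ 2) * (f (x + t • w) - f x - t * dReal f x w)

/-- `f` is twice semidifferentiable at `x`. -/
def TwiceSemiDiffAt (f : E → ℝ) (x : E) : Prop :=
  SemiDiffAt f x ∧
    ∀ w : E, ∃ d : ℝ,
      Tendsto (fun p : ℝ × E => sdq2R f x p.1 p.2)
        ((nhdsWithin (0 : ℝ) (Set.Ioi 0)) ×ˢ nhds w) (nhds d)

/-- The second semiderivative `d²f(x)(w)` (the liminf; it is the full limit whenever `f` is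
twice semidifferentiable at `x`). -/
noncomputable def secondSemiDeriv (f : E → ℝ) (x w : E) : EReal :=
  Filter.liminf (fun p : ℝ × E => ((sdq2R f x p.1 p.2 : ℝ) : EReal))
    ((nhdsWithin (0 : ℝ) (Set.Ioi 0)) ×ˢ nhds w)

/-- `f` is (Fréchet) differentiable at `x` with gradient `g` (w.r.t. inner product `ip`). -/
def HasGradAt (ip : E → E → ℝ) (f : E → ℝ) (x g : E) : Prop :=
  Tendsto (fun y : E => (nrm ip (y - x))⁻¹ * (f y - f x - ip g (y - x)))
    (nhdsWithin x {x}ᶜ) (nhds 0)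

/-- `f` is locally Lipschitz continuous around `x`. -/
def LocLipAt (ip : E → E → ℝ) (f : E → ℝ) (x : E) : Prop :=
  ∃ V ∈ nhds x, ∃ ℓ : ℝ, 0 ≤ ℓ ∧ ∀ a ∈ V, ∀ b ∈ V, |f a - f b| ≤ ℓ * nrm ip (a - b)

/-- `f` is twice differentiable at `x` with gradient map `G` near `x` and second derivative
(the derivative of `G` at `x`) given by the linear map `Dxx`. -/
def HasSecondDerivAt (ip : E → E → ℝ) (f : E → EReal) (x : E) (G : E → E) (Dxx : E → E) :
    Prop :=
  ∃ V ∈ nhds x, ∃ fr : E → ℝ,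
    (∀ z ∈ V, f z = ((fr z : ℝ) : EReal)) ∧
    (∀ z ∈ V, HasGradAt ip fr z (G z)) ∧
    IsLinearMap ℝ Dxx ∧
    Tendsto (fun z : E => (nrm ip (z - x))⁻¹ • (G z - G x - Dxx (z - x)))
      (nhdsWithin x {x}ᶜ) (nhds 0)

/-- `f` is twice differentiable at `x`. -/
def TwiceDiffAt (ip : E → E → ℝ) (f : E → EReal) (x : E) : Prop :=
  ∃ G Dxx : E → E, HasSecondDerivAt ip f x G Dxx

end Generic

/-! ## Eigenvalues and spectral machinery -/

open scoped Classical in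
/-- The eigenvalues of a real symmetric matrix, arranged in nonincreasing order
(junk value `0` if the matrix is not symmetric). -/
noncomputable def eigval {n : ℕ} (X : Matrix (Fin n) (Fin n) ℝ) : Fin n → ℝ :=
  if h : X.IsHermitian then
    fun i => h.eigenvalues (Tuple.sort (fun j => -h.eigenvalues j) i)
  else 0

/-- `Oⁿ(X)`: orthogonal matrices realizing the ordered spectral decomposition of `X`. -/
def eigOrth {n : ℕ} (X : Matrix (Fin n) (Fin n) ℝ) : Set (Matrix (Fin n) (Fin n) ℝ) :=
  {U | U * Uᵀ = 1 ∧ X = U * Matrix.diagonal (eigval X) * Uᵀ}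

open scoped Classical in
/-- The block `α_m` of indices `j` whose eigenvalue `λ_j(X)` equals `λ_i(X)`. -/
noncomputable def blockSet {n : ℕ} (X : Matrix (Fin n) (Fin n) ℝ) (i : Fin n) :
    Finset (Fin n) :=
  Finset.univ.filter fun j => eigval X j = eigval X i

lemma mem_blockSet_self {n : ℕ} (X : Matrix (Fin n) (Fin n) ℝ) (i : Fin n) :
    i ∈ blockSet X i := by
  simp [blockSet]

/-- The increasing enumeration of the block of `i`. -/
noncomputable def blockEmb {n : ℕ} (X : Matrix (Fin n) (Fin n) ℝ) (i : Fin n) :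
    Fin (blockSet X i).card → Fin n :=
  fun a => ((blockSet X i).orderIsoOfFin rfl a : Fin n)

/-- The position of `i` inside its own block. -/
noncomputable def blockIdx {n : ℕ} (X : Matrix (Fin n) (Fin n) ℝ) (i : Fin n) :
    Fin (blockSet X i).card :=
  ((blockSet X i).orderIsoOfFin rfl).symm ⟨i, mem_blockSet_self X i⟩

/-- The principal submatrix of `M` corresponding to the block of `i` (for `X`). -/
noncomputable def blockMat {n : ℕ} (X M : Matrix (Fin n) (Fin n) ℝ) (i : Fin n) :
    Matrix (Fin (blockSet X i).card) (Fin (blockSet X i).card) ℝ :=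
  Matrix.of fun a b => M (blockEmb X i a) (blockEmb X i b)

/-- The directional derivative `λ'(X;H)` of the ordered eigenvalue map, computed through
`U ∈ Oⁿ(X)`: blockwise ordered eigenvalues of `U_{α_m}ᵀ H U_{α_m}`. -/
noncomputable def lambdaDir {n : ℕ} (X U H : Matrix (Fin n) (Fin n) ℝ) : Fin n → ℝ :=
  fun i => eigval (blockMat X (Uᵀ * H * U) i) (blockIdx X i)

open scoped Classical in
/-- The Moore–Penrose pseudoinverse of a square real matrix, characterized by the four
Penrose equations. -/
noncomputable def pinv {n : ℕ} (A : Matrix (Fin n) (Fin n) ℝ) :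
    Matrix (Fin n) (Fin n) ℝ :=
  if h : ∃ B : Matrix (Fin n) (Fin n) ℝ,
      A * B * A = A ∧ B * A * B = B ∧ (A * B)ᵀ = A * B ∧ (B * A)ᵀ = B * A
  then h.choose else 0

/-- The curvature term `2 ∑ₘ ⟨Diag(y)_{αₘαₘ}, U_{αₘ}ᵀ H (μₘ I - X)† H U_{αₘ}⟩`, written as a
single sum over all indices. -/
noncomputable def curvTerm {n : ℕ} (X U H : Matrix (Fin n) (Fin n) ℝ) (y : Fin n → ℝ) : ℝ :=
  2 * ∑ i : Fin n, y i *
    (Uᵀ * (H * pinv (eigval X i • (1 : Matrix (Fin n) (Fin n) ℝ) - X) * H) * U) i i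

/-- Two symmetric matrices admit a simultaneous ordered spectral decomposition. -/
def simOrdSpec {k : ℕ} (A B : Matrix (Fin k) (Fin k) ℝ) : Prop :=
  ∃ P : Matrix (Fin k) (Fin k) ℝ, P * Pᵀ = 1 ∧
    A = P * Matrix.diagonal (eigval A) * Pᵀ ∧
    B = P * Matrix.diagonal (eigval B) * Pᵀ

/-- The subspace of symmetric `n × n` real matrices. -/
def symSubmodule (n : ℕ) : Submodule ℝ (Matrix (Fin n) (Fin n) ℝ) where
  carrier := {A | A.IsSymm}
  add_mem' := by
    intro a b ha hb
    simp only [Set.mem_setOf_eq, Matrix.IsSymm] at *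
    rw [Matrix.transpose_add, ha, hb]
  zero_mem' := by
    simp only [Set.mem_setOf_eq, Matrix.IsSymm, Matrix.transpose_zero]
  smul_mem' := by
    intro c a ha
    simp only [Set.mem_setOf_eq, Matrix.IsSymm] at *
    rw [Matrix.transpose_smul, ha]

/-- The space `Sⁿ` of symmetric `n × n` real matrices. -/
abbrev Sym (n : ℕ) : Type := ↥(symSubmodule n)

/-- The trace inner product `⟨A, B⟩ = tr(AB)` on `Sⁿ`. -/
noncomputable def ipM {n : ℕ} (A B : Sym n) : ℝ :=
  ((A : Matrix (Fin n) (Fin n) ℝ) * (B : Matrix (Fin n) (Fin n) ℝ)).trace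

/-- The Euclidean inner product on `ℝⁿ`. -/
def ipV {n : ℕ} (v w : Fin n → ℝ) : ℝ :=
  ∑ i, v i * w i

/-- The spectral function `g = θ ∘ λ` on `Sⁿ`. -/
noncomputable def specFn {n : ℕ} (θ : (Fin n → ℝ) → EReal) : Sym n → EReal :=
  fun A => θ (eigval (A : Matrix (Fin n) (Fin n) ℝ))

/-- A function on `ℝⁿ` is symmetric (permutation invariant). -/
def SymmetricFn {n : ℕ} {α : Type*} (θ : (Fin n → ℝ) → α) : Prop :=
  ∀ (x : Fin n → ℝ) (σ : Equiv.Perm (Fin n)), θ (fun i => x (σ i)) = θ x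

/-- The diagonal matrix `Diag(w)` as an element of `Sⁿ`. -/
noncomputable def diagSym {n : ℕ} (w : Fin n → ℝ) : Sym n :=
  ⟨Matrix.diagonal w, Matrix.isSymm_diagonal w⟩

/-- The `i`-th order statistic: `orderStat x i` is the `i`-th largest entry of `x`. -/
noncomputable def orderStat {n : ℕ} (x : Fin n → ℝ) : Fin n → ℝ :=
  fun i => x (Tuple.sort (fun j => -x j) i)

/-!
Write `X = U Diag(x) Uᵀ`, `Y = U Diag(y) Uᵀ`, and look at the second-order difference quotients of
`g` near a direction `H`.

Every `H` splits as `⁅A, X⁆ + H₀` with `A` skew and `H₀` commuting with `X`. Conjugation by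
`exp (t A)` leaves `g` invariant and turns the quotients near `H₀` into those near `H`, up to a
shift converging to a finite constant, so `H` may be replaced by `H₀`. If `H₀` does not commute
with `Y`, some orthogonal `R` fixes `X` and satisfies `⟨Y, R H₀ Rᵀ⟩ > ⟨Y, H₀⟩`; the regular
subgradient inequality along `R H₀ Rᵀ` then forces the quotients near `H₀` to tend to `+∞`.

Otherwise `X`, `Y`, `H₀` are diagonalized together, with `H₀ = U Diag(w) Uᵀ` for a new `U`. The
same argument with permutations gives `+∞` unless `y` and `w` are similarly ordered wherever `x` is
constant. In that case a single vector orders the indices compatibly with `x + t w` and with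
`x + s y` for all small `t, s > 0`. Sorting the eigenvalues of `X + t K` by it, Hoffman–Wielandt
against `X + t H₀` shows that the eigenvalue directions converge to `w` as `K → H₀`, and against
`X + s Y` that the linear terms of the quotients of `g` and `θ` differ by a vanishing amount.
-/

section EpiLimit

variable {E' : Type*} [TopologicalSpace E] [TopologicalSpace E']

/-- The lower epi-limit at `w`, as `t ↓ 0`, of a family `q t` of extended-real functions; for the
second-order difference quotients it is the second subderivative. -/
def lowerEpiLimit (q : ℝ → E → EReal) (w : E) : EReal :=
  liminf (fun p : ℝ × E => q p.1 p.2) (𝓝[>] 0 ×ˢ 𝓝 w)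

/-- Epi-convergence at the single point `w` of a family `q t` as `t ↓ 0`: along every sequence of
parameters the lower epi-limit is attained by a recovery sequence. -/
def EpiConvergesAt (q : ℝ → E → EReal) (w : E) : Prop :=
  ∀ t : ℕ → ℝ, (∀ k, 0 < t k) → Tendsto t atTop (𝓝 0) →
    ∃ ws : ℕ → E, Tendsto ws atTop (𝓝 w) ∧
      Tendsto (fun k => q (t k) (ws k)) atTop (𝓝 (lowerEpiLimit q w))

/-- The family `q'` near `w'`, raised by (asymptotically) the constant `c`, lies below the family
`q` near `w`. The comparison point for `q'` may depend on the parameter and on the point. -/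
def EpiLE (q' : ℝ → E' → EReal) (w' : E') (c : ℝ) (q : ℝ → E → EReal) (w : E) : Prop :=
  ∃ (Φ : ℝ × E → E') (e : ℝ × E → ℝ),
    Tendsto Φ (𝓝[>] 0 ×ˢ 𝓝 w) (𝓝 w') ∧ Tendsto e (𝓝[>] 0 ×ˢ 𝓝 w) (𝓝 c) ∧
      ∀ᶠ p in 𝓝[>] 0 ×ˢ 𝓝 w, q' p.1 (Φ p) + (e p : EReal) ≤ q p.1 p.2

variable {q : ℝ → E → EReal} {q' : ℝ → E' → EReal} {w : E} {w' : E'} {c : ℝ}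

lemma lowerEpiLimit_le_liminf {α : Type*} {l : Filter α} {t : α → ℝ} {ws : α → E}
    (ht : Tendsto t l (𝓝[>] 0)) (hws : Tendsto ws l (𝓝 w)) :
    lowerEpiLimit q w ≤ liminf (fun k => q (t k) (ws k)) l := by
  have hp : map (fun k => (t k, ws k)) l ≤ 𝓝[>] 0 ×ˢ 𝓝 w := ht.prodMk hws
  exact liminf_le_liminf_of_le (u := fun p : ℝ × E => q p.1 p.2) hp

lemma epiConvergesAt_of_lowerEpiLimit_eq_top (h : lowerEpiLimit q w = ⊤) :
    EpiConvergesAt q w := by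
  intro t ht0 ht
  refine ⟨fun _ => w, tendsto_const_nhds, ?_⟩
  have ht' : Tendsto t atTop (𝓝[>] 0) := tendsto_nhdsWithin_iff.2 ⟨ht, .of_forall ht0⟩
  rw [h]
  exact tendsto_of_le_liminf_of_limsup_le
    (h ▸ lowerEpiLimit_le_liminf ht' tendsto_const_nhds) le_top

lemma lowerEpiLimit_eq_top_of_inv_mul_le {r : E → ℝ}
    (hr : ContinuousAt r w) (hpos : 0 < r w)
    (hle : ∀ᶠ p in 𝓝[>] 0 ×ˢ 𝓝 w, ((p.1⁻¹ * r p.2 : ℝ) : EReal) ≤ q p.1 p.2) :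
    lowerEpiLimit q w = ⊤ := by
  have hlim : Tendsto (fun p : ℝ × E => p.1⁻¹ * r p.2) (𝓝[>] 0 ×ˢ 𝓝 w) atTop :=
    (tendsto_inv_nhdsGT_zero.comp tendsto_fst).atTop_mul_pos hpos (hr.tendsto.comp tendsto_snd)
  refine top_le_iff.1 (le_trans ?_ (liminf_le_liminf hle))
  exact (EReal.tendsto_coe_nhds_top_iff.2 hlim).liminf_eq.ge

lemma tendsto_add_coe {α : Type*} {l : Filter α} {f : α → EReal} {e : α → ℝ} {L : EReal}
    (hf : Tendsto f l (𝓝 L)) (he : Tendsto e l (𝓝 c)) :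
    Tendsto (fun a => f a + (e a : EReal)) l (𝓝 (L + c)) :=
  (EReal.continuousAt_add (.inr (EReal.coe_ne_bot c)) (.inr (EReal.coe_ne_top c))).tendsto.comp
    (hf.prodMk_nhds (EReal.tendsto_coe.2 he))

lemma le_add_neg_coe_iff {a b : EReal} : a ≤ b + ((-c : ℝ) : EReal) ↔ a + c ≤ b := by
  rw [EReal.coe_neg, ← sub_eq_add_neg, EReal.le_sub_iff_add_le (.inl (EReal.coe_ne_bot c))
    (.inl (EReal.coe_ne_top c))]

namespace EpiLE

lemma lowerEpiLimit_add_le (h : EpiLE q' w' c q w) :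
    lowerEpiLimit q' w' + c ≤ lowerEpiLimit q w := by
  obtain ⟨Φ, e, hΦ, he, hle⟩ := h
  calc lowerEpiLimit q' w' + c
      ≤ liminf (fun p : ℝ × E => q' p.1 (Φ p)) (𝓝[>] 0 ×ˢ 𝓝 w) +
          liminf (fun p => (e p : EReal)) (𝓝[>] 0 ×ˢ 𝓝 w) := by
        rw [(EReal.tendsto_coe.2 he).liminf_eq]
        gcongr
        exact lowerEpiLimit_le_liminf tendsto_fst hΦ
    _ ≤ liminf (fun p : ℝ × E => q' p.1 (Φ p) + (e p : EReal)) (𝓝[>] 0 ×ˢ 𝓝 w) :=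
        EReal.le_liminf_add
    _ ≤ lowerEpiLimit q w := liminf_le_liminf hle

lemma epiConvergesAt (h : EpiLE q' w' c q w) (hlim : lowerEpiLimit q w ≤ lowerEpiLimit q' w' + c)
    (hq : EpiConvergesAt q w) : EpiConvergesAt q' w' := by
  obtain ⟨Φ, e, hΦ, he, hle⟩ := h
  intro t ht0 ht
  obtain ⟨ws, hws, hqs⟩ := hq t ht0 ht
  have ht' : Tendsto t atTop (𝓝[>] 0) := tendsto_nhdsWithin_iff.2 ⟨ht, .of_forall ht0⟩
  have hp : Tendsto (fun k => (t k, ws k)) atTop (𝓝[>] 0 ×ˢ 𝓝 w) := ht'.prodMk hws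
  refine ⟨fun k => Φ (t k, ws k), hΦ.comp hp,
    tendsto_of_le_liminf_of_limsup_le (lowerEpiLimit_le_liminf ht' (hΦ.comp hp)) ?_⟩
  calc limsup (fun k => q' (t k) (Φ (t k, ws k))) atTop
      ≤ limsup (fun k => q (t k) (ws k) + ((-e (t k, ws k) : ℝ) : EReal)) atTop :=
        limsup_le_limsup ((hp.eventually hle).mono fun k hk => le_add_neg_coe_iff.2 hk)
    _ = lowerEpiLimit q w + ((-c : ℝ) : EReal) :=
        (tendsto_add_coe hqs (he.comp hp).neg).limsup_eq
    _ ≤ lowerEpiLimit q' w' := by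
        rw [← neg_neg c] at hlim
        exact le_add_neg_coe_iff.1 hlim

lemma epiConvergesAt_iff (h : EpiLE q' w' c q w) (h' : EpiLE q w (-c) q' w') :
    EpiConvergesAt q' w' ↔ EpiConvergesAt q w := by
  have hle := h.lowerEpiLimit_add_le
  have hle' := h'.lowerEpiLimit_add_le
  exact ⟨h'.epiConvergesAt (le_add_neg_coe_iff.2 hle),
    h.epiConvergesAt (by rw [← neg_neg c]; exact le_add_neg_coe_iff.2 hle')⟩

end EpiLE

end EpiLimit

section DifferenceQuotient

variable {E' : Type*} [AddCommGroup E] [Module ℝ E] [AddCommGroup E'] [Module ℝ E']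

lemma twiceEpiDiff_iff [TopologicalSpace E] {ip : E → E → ℝ} {f : E → EReal} {x v : E} :
    TwiceEpiDiff ip f x v ↔ IsFiniteAt f x ∧ ∀ w, EpiConvergesAt (sdq2 ip f x v) w :=
  and_congr_right fun _ =>
    ⟨fun h w t ht0 ht => h t ht0 ht w, fun h t ht0 ht w => h w t ht0 ht⟩

lemma sdq2_eq_sdq2_add {ip : E → E → ℝ} {ip' : E' → E' → ℝ} {f : E → EReal} {f' : E' → EReal}
    {x v w : E} {x' v' w' : E'} {t : ℝ} (hx : IsFiniteAt f x) (ht : 0 < t)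
    (hf : f' x' = f x) (hfw : f' (x' + t • w') = f (x + t • w)) :
    sdq2 ip' f' x' v' t w' =
      sdq2 ip f x v t w + ((2 / t * (ip v w - ip' v' w') : ℝ) : EReal) := by
  have ht2 : 0 < 2 / t ^ 2 := by positivity
  rw [sdq2, sdq2, hf, hfw, ← EReal.coe_toReal hx.1 hx.2]
  induction f (x + t • w) with
  | bot => simp [EReal.coe_mul_bot_of_pos ht2]
  | top =>
    simp only [EReal.top_sub_coe, EReal.coe_mul_top_of_pos ht2, EReal.top_add_coe]
  | coe r =>
    norm_cast
    field_simp
    ring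

end DifferenceQuotient

/-- `ip` is a symmetric positive definite bilinear form, jointly continuous for the given topology.
The variational notions take an arbitrary function `ip`; this is the hypothesis making it an inner
product. -/
structure IsInnerProduct [AddCommGroup E] [Module ℝ E] [TopologicalSpace E] (ip : E → E → ℝ) :
    Prop where
  comm : ∀ a b, ip a b = ip b a
  add_right : ∀ a b c, ip a (b + c) = ip a b + ip a c
  smul_right : ∀ (a : E) (r : ℝ) (b : E), ip a (r • b) = r * ip a b
  pos : ∀ a, a ≠ 0 → 0 < ip a a
  continuous : Continuous fun p : E × E => ip p.1 p.2

namespace IsInnerProduct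

variable [AddCommGroup E] [Module ℝ E] [TopologicalSpace E] {ip : E → E → ℝ}

lemma zero_right (hip : IsInnerProduct ip) (a : E) : ip a 0 = 0 := by
  simpa using hip.smul_right a 0 0

lemma sub_right (hip : IsInnerProduct ip) (a b c : E) : ip a (b - c) = ip a b - ip a c := by
  rw [eq_sub_iff_add_eq, ← hip.add_right, sub_add_cancel]

lemma sub_self_sub (hip : IsInnerProduct ip) (a b : E) :
    ip (a - b) (a - b) = ip a a - 2 * ip a b + ip b b := by
  rw [hip.sub_right, hip.comm _ a, hip.comm _ b, hip.sub_right, hip.sub_right, hip.comm b a]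
  ring

lemma smul_self_smul (hip : IsInnerProduct ip) (r : ℝ) (a : E) :
    ip (r • a) (r • a) = r ^ 2 * ip a a := by
  rw [hip.smul_right, hip.comm, hip.smul_right]
  ring

lemma nrm_smul (hip : IsInnerProduct ip) {r : ℝ} (hr : 0 ≤ r) (a : E) :
    nrm ip (r • a) = r * nrm ip a := by
  rw [nrm, hip.smul_self_smul, Real.sqrt_mul (sq_nonneg r), Real.sqrt_sq hr, nrm]

lemma continuous_right (hip : IsInnerProduct ip) (a : E) : Continuous (ip a) :=
  hip.continuous.comp (.prodMk_right a)

lemma continuous_self (hip : IsInnerProduct ip) : Continuous fun a => ip a a :=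
  hip.continuous.comp (continuous_id.prodMk continuous_id)

lemma continuous_nrm (hip : IsInnerProduct ip) : Continuous (nrm ip) :=
  hip.continuous_self.sqrt

end IsInnerProduct

section RegularSubgradient

variable [AddCommGroup E] [Module ℝ E] {ip : E → E → ℝ} {f : E → EReal} {x v w : E}

lemma eventually_add_le_of_regSubgrad [TopologicalSpace E] (hip : IsInnerProduct ip)
    (hv : RegSubgrad ip f x v) {ε : ℝ} (hε : 0 < ε) :
    ∀ᶠ z in 𝓝 x, f x + ((ip v (z - x) - ε * nrm ip (z - x) : ℝ) : EReal) ≤ f z := by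
  have hlim := eventually_lt_of_lt_liminf
    (lt_of_lt_of_le (EReal.coe_neg'.2 (neg_neg_of_pos hε)) hv.2 : ((-ε : ℝ) : EReal) < _)
  rw [eventually_nhdsWithin_iff] at hlim
  filter_upwards [hlim] with z hz
  rw [← EReal.coe_toReal hv.1.1 hv.1.2] at hz ⊢
  rcases eq_or_ne z x with rfl | hzx
  · simp [hip.zero_right, nrm, EReal.coe_toReal hv.1.1 hv.1.2]
  specialize hz hzx
  have hpos : 0 < nrm ip (z - x) := Real.sqrt_pos.2 (hip.pos _ (sub_ne_zero.2 hzx))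
  generalize f z = value at hz ⊢
  induction value with
  | bot => simp [EReal.coe_mul_bot_of_pos (inv_pos.2 hpos)] at hz
  | top => exact le_top
  | coe r =>
    norm_cast at hz ⊢
    rw [inv_mul_eq_div, lt_div_iff₀ hpos] at hz
    linarith

lemma coe_le_sdq2 (hx : IsFiniteAt f x) {t r : ℝ} (ht : 0 < t)
    (h : f x + ((t * r : ℝ) : EReal) ≤ f (x + t • w)) :
    ((t⁻¹ * (2 * (r - ip v w)) : ℝ) : EReal) ≤ sdq2 ip f x v t w := by
  have ht2 : 0 < 2 / t ^ 2 := by positivity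
  rw [sdq2]
  rw [← EReal.coe_toReal hx.1 hx.2] at h ⊢
  generalize f (x + t • w) = value at h ⊢
  induction value with
  | bot => exact absurd (le_bot_iff.1 h) (EReal.coe_ne_bot ((f x).toReal + t * r))
  | top =>
    rw [EReal.top_sub_coe, EReal.top_sub_coe, EReal.coe_mul_top_of_pos ht2]
    exact le_top
  | coe s =>
    norm_cast at h ⊢
    calc t⁻¹ * (2 * (r - ip v w)) = 2 / t ^ 2 * (t * r - t * ip v w) := by field_simp
      _ ≤ 2 / t ^ 2 * (s - (f x).toReal - t * ip v w) := by gcongr; linarith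

/-- The regular subgradient inequality at the points `x + t • L w'` bounds the quotient in direction
`w'` below by a positive multiple of `t⁻¹`. -/
lemma lowerEpiLimit_sdq2_eq_top_of_invariant [TopologicalSpace E] [ContinuousAdd E]
    [ContinuousSMul ℝ E] (hip : IsInnerProduct ip) (hv : RegSubgrad ip f x v) {L : E →L[ℝ] E}
    (hfL : ∀ z, f (L z) = f z) (hLx : L x = x) (hlt : ip v w < ip v (L w)) :
    lowerEpiLimit (sdq2 ip f x v) w = ⊤ := by
  obtain ⟨ε, hε, hεlt⟩ := exists_pos_mul_lt (sub_pos.2 hlt) (nrm ip (L w))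
  refine lowerEpiLimit_eq_top_of_inv_mul_le
    (r := fun w' => 2 * (ip v (L w') - ε * nrm ip (L w') - ip v w')) ?_ (by linarith) ?_
  · have := hip.continuous_right v
    have := hip.continuous_nrm
    fun_prop
  have hx : Tendsto (fun p : ℝ × E => x + p.1 • L p.2) (𝓝[>] 0 ×ˢ 𝓝 w) (𝓝 x) := by
    have hcont : Continuous fun p : ℝ × E => x + p.1 • L p.2 := by fun_prop
    refine (hcont.tendsto' (0, w) x (by simp)).mono_left ?_
    rw [nhds_prod_eq]
    exact prod_mono_left _ nhdsWithin_le_nhds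
  filter_upwards [hx.eventually (eventually_add_le_of_regSubgrad hip hv hε),
    tendsto_fst.eventually self_mem_nhdsWithin] with ⟨t, w'⟩ hreg (ht : 0 < t)
  refine coe_le_sdq2 hv.1 ht ?_
  have hmap : x + t • L w' = L (x + t • w') := by simp [hLx]
  rw [← hfL (x + t • w'), ← hmap]
  convert hreg using 3
  rw [add_sub_cancel_left, hip.smul_right, hip.nrm_smul ht.le]
  ring

end RegularSubgradient

section Orthogonal

variable {ι : Type*} [Fintype ι] [DecidableEq ι] {U V : Matrix ι ι ℝ} {a b : ι → ℝ}

lemma transpose_mem_orthogonalGroup (hU : U ∈ orthogonalGroup ι ℝ) :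
    Uᵀ ∈ orthogonalGroup ι ℝ := by
  rw [mem_orthogonalGroup_iff', transpose_transpose]
  exact (mem_orthogonalGroup_iff ι ℝ).1 hU

lemma conj_mul_conj (hU : U ∈ orthogonalGroup ι ℝ) (A B : Matrix ι ι ℝ) :
    U * A * Uᵀ * (U * B * Uᵀ) = U * (A * B) * Uᵀ := by
  have hU' := (mem_orthogonalGroup_iff' ι ℝ).1 hU
  calc U * A * Uᵀ * (U * B * Uᵀ) = U * A * (Uᵀ * U) * B * Uᵀ := by simp only [Matrix.mul_assoc]
    _ = U * (A * B) * Uᵀ := by rw [hU', Matrix.mul_one]; simp only [Matrix.mul_assoc]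

lemma commute_conj_conj (hU : U ∈ orthogonalGroup ι ℝ) {A B : Matrix ι ι ℝ} (h : Commute A B) :
    Commute (U * A * Uᵀ) (U * B * Uᵀ) := by
  rw [commute_iff_eq, conj_mul_conj hU, conj_mul_conj hU, h.eq]

/-- Since `U` is invertible, some term of the Leibniz expansion of `det U` is nonzero; its
permutation matches the two diagonals. -/
lemma exists_perm_of_diagonal_mul_eq_mul_diagonal (hU : U.det ≠ 0)
    (h : diagonal a * U = U * diagonal b) : ∃ σ : Equiv.Perm ι, a ∘ σ = b := by
  rw [det_apply] at hU
  obtain ⟨σ, -, hσ⟩ := Finset.exists_ne_zero_of_sum_ne_zero hU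
  refine ⟨σ, funext fun i => ?_⟩
  have hUi : U (σ i) i ≠ 0 :=
    Finset.prod_ne_zero_iff.1 (right_ne_zero_of_smul hσ) i (Finset.mem_univ i)
  have hentry := congrFun (congrFun h (σ i)) i
  rw [diagonal_mul, mul_diagonal, mul_comm] at hentry
  exact mul_left_cancel₀ hUi hentry

lemma exists_perm_of_conj_diagonal_eq (hU : U ∈ orthogonalGroup ι ℝ)
    (hV : V ∈ orthogonalGroup ι ℝ) (h : U * diagonal a * Uᵀ = V * diagonal b * Vᵀ) :
    ∃ σ : Equiv.Perm ι, a ∘ σ = b := by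
  have hW := mul_mem (transpose_mem_orthogonalGroup hU) hV
  have hU' := (mem_orthogonalGroup_iff' ι ℝ).1 hU
  have hV' := (mem_orthogonalGroup_iff' ι ℝ).1 hV
  refine exists_perm_of_diagonal_mul_eq_mul_diagonal (U := Uᵀ * V) ?_ ?_
  · exact det_ne_zero_of_right_inverse ((mem_orthogonalGroup_iff ι ℝ).1 hW)
  · calc diagonal a * (Uᵀ * V) = Uᵀ * U * diagonal a * Uᵀ * V := by
          rw [hU', Matrix.one_mul, Matrix.mul_assoc]
      _ = Uᵀ * (U * diagonal a * Uᵀ) * V := by simp only [Matrix.mul_assoc]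
      _ = Uᵀ * V * diagonal b * (Vᵀ * V) := by rw [h]; simp only [Matrix.mul_assoc]
      _ = Uᵀ * V * diagonal b := by rw [hV', Matrix.mul_one]

lemma conj_diagonal_submatrix_perm (U : Matrix ι ι ℝ) (a : ι → ℝ) (σ : Equiv.Perm ι) :
    U.submatrix id σ * diagonal (a ∘ σ) * (U.submatrix id σ)ᵀ = U * diagonal a * Uᵀ := by
  rw [← submatrix_diagonal_equiv, transpose_submatrix, submatrix_mul_equiv, submatrix_mul_equiv,
    submatrix_id_id]

lemma submatrix_perm_mem_orthogonalGroup (hU : U ∈ orthogonalGroup ι ℝ) (σ : Equiv.Perm ι) :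
    U.submatrix id σ ∈ orthogonalGroup ι ℝ := by
  rw [mem_orthogonalGroup_iff, transpose_submatrix, submatrix_mul_equiv, submatrix_id_id]
  exact (mem_orthogonalGroup_iff ι ℝ).1 hU

lemma exists_mem_orthogonalGroup_eq_conj_eigenvalues {A : Matrix ι ι ℝ} (hA : A.IsHermitian) :
    ∃ V ∈ orthogonalGroup ι ℝ, A = V * diagonal hA.eigenvalues * Vᵀ := by
  refine ⟨hA.eigenvectorUnitary, ?_, ?_⟩
  · rw [mem_orthogonalGroup_iff, ← conjTranspose_eq_transpose_of_trivial]
    exact mem_unitaryGroup_iff.1 hA.eigenvectorUnitary.2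
  · rw [← conjTranspose_eq_transpose_of_trivial]
    exact hA.spectral_theorem

end Orthogonal

section Conjugation

variable {n : ℕ} {U R : Matrix (Fin n) (Fin n) ℝ} {θ : (Fin n → ℝ) → EReal}

lemma conj_mem_symSubmodule (R : Matrix (Fin n) (Fin n) ℝ) (K : Sym n) :
    R * K.val * Rᵀ ∈ symSubmodule n := by
  change (R * K.val * Rᵀ)ᵀ = R * K.val * Rᵀ
  rw [transpose_mul, transpose_mul, transpose_transpose, K.2, Matrix.mul_assoc]

/-- Conjugation `K ↦ R K Rᵀ`, as a continuous linear endomorphism of `Sⁿ`. -/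
def conjSym (R : Matrix (Fin n) (Fin n) ℝ) : Sym n →L[ℝ] Sym n where
  toFun K := ⟨R * K.val * Rᵀ, conj_mem_symSubmodule R K⟩
  map_add' A B := Subtype.ext (by simp [Matrix.mul_add, Matrix.add_mul])
  map_smul' r A := Subtype.ext (by simp)
  cont := ((continuous_const.matrix_mul continuous_subtype_val).matrix_mul
    continuous_const).subtype_mk _

/-- The map `a ↦ U Diag(a) Uᵀ` from `ℝⁿ` to `Sⁿ`. -/
def conjDiag (U : Matrix (Fin n) (Fin n) ℝ) : (Fin n → ℝ) →L[ℝ] Sym n where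
  toFun a := conjSym U (diagSym a)
  map_add' a b := by rw [← map_add]; exact congrArg _ (Subtype.ext (diagonal_add a b).symm)
  map_smul' r a := by
    rw [RingHom.id_apply, ← map_smul]; exact congrArg _ (Subtype.ext (diagonal_smul r a))
  cont := (conjSym U).continuous.comp (continuous_id.matrix_diagonal.subtype_mk _)

lemma coe_conjSym (R : Matrix (Fin n) (Fin n) ℝ) (K : Sym n) :
    (conjSym R K).val = R * K.val * Rᵀ := rfl

lemma coe_conjDiag (U : Matrix (Fin n) (Fin n) ℝ) (a : Fin n → ℝ) :
    (conjDiag U a).val = U * diagonal a * Uᵀ := rfl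

lemma conjSym_conjDiag (R U : Matrix (Fin n) (Fin n) ℝ) (a : Fin n → ℝ) :
    conjSym R (conjDiag U a) = conjDiag (R * U) a := by
  apply Subtype.ext
  simp only [coe_conjSym, coe_conjDiag, transpose_mul, Matrix.mul_assoc]

lemma conjDiag_submatrix_perm (U : Matrix (Fin n) (Fin n) ℝ) (a : Fin n → ℝ)
    (σ : Equiv.Perm (Fin n)) : conjDiag (U.submatrix id σ) (a ∘ σ) = conjDiag U a :=
  Subtype.ext (conj_diagonal_submatrix_perm U a σ)

lemma isHermitian_coe (K : Sym n) : K.val.IsHermitian :=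
  (conjTranspose_eq_transpose_of_trivial K.val).trans K.2

lemma exists_eq_conjDiag_eigval (K : Sym n) :
    ∃ V ∈ orthogonalGroup (Fin n) ℝ, K = conjDiag V (eigval K.val) := by
  have hK := isHermitian_coe K
  obtain ⟨V, hV, hKV⟩ := exists_mem_orthogonalGroup_eq_conj_eigenvalues hK
  set σ := Tuple.sort fun j => -hK.eigenvalues j
  have heig : eigval K.val = hK.eigenvalues ∘ σ := by rw [eigval, dif_pos hK]; rfl
  refine ⟨V.submatrix id σ, submatrix_perm_mem_orthogonalGroup hV σ, ?_⟩
  rw [heig, conjDiag_submatrix_perm]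
  exact Subtype.ext hKV

lemma specFn_conjDiag (hθ : SymmetricFn θ) (hU : U ∈ orthogonalGroup (Fin n) ℝ)
    (a : Fin n → ℝ) : specFn θ (conjDiag U a) = θ a := by
  obtain ⟨V, hV, hUV⟩ := exists_eq_conjDiag_eigval (conjDiag U a)
  obtain ⟨σ, hσ⟩ := exists_perm_of_conj_diagonal_eq hU hV (congrArg Subtype.val hUV)
  rw [specFn, ← hσ]
  exact hθ a σ

lemma specFn_conjSym (hθ : SymmetricFn θ) (hR : R ∈ orthogonalGroup (Fin n) ℝ) (K : Sym n) :
    specFn θ (conjSym R K) = specFn θ K := by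
  obtain ⟨V, hV, hK⟩ := exists_eq_conjDiag_eigval K
  generalize eigval K.val = a at hK
  rw [hK, conjSym_conjDiag, specFn_conjDiag hθ (mul_mem hR hV), specFn_conjDiag hθ hV]

end Conjugation

section TraceInnerProduct

lemma trace_transpose_mul_self_pos {ι : Type*} [Fintype ι] {A : Matrix ι ι ℝ} (hA : A ≠ 0) :
    0 < (Aᵀ * A).trace := by
  rw [← conjTranspose_eq_transpose_of_trivial]
  exact (posSemidef_conjTranspose_mul_self A).trace_nonneg.lt_of_ne'
    (trace_conjTranspose_mul_self_eq_zero_iff.not.2 hA)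

variable {n : ℕ} {U : Matrix (Fin n) (Fin n) ℝ}

lemma isInnerProduct_ipV : IsInnerProduct (ipV : (Fin n → ℝ) → (Fin n → ℝ) → ℝ) where
  comm := dotProduct_comm
  add_right := dotProduct_add
  smul_right a r b := dotProduct_smul r a b
  pos a ha := (Finset.sum_nonneg fun i _ => mul_self_nonneg (a i)).lt_of_ne'
    (dotProduct_self_eq_zero.not.2 ha)
  continuous := by unfold ipV; fun_prop

lemma isInnerProduct_ipM : IsInnerProduct (ipM : Sym n → Sym n → ℝ) where
  comm A B := trace_mul_comm _ _
  add_right A B C := by simp [ipM, Matrix.mul_add]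
  smul_right A r B := by simp [ipM]
  pos A hA := by
    have hpos := trace_transpose_mul_self_pos (Submodule.coe_eq_zero.not.2 hA)
    rwa [A.2] at hpos
  continuous := ((continuous_subtype_val.comp continuous_fst).matrix_mul
    (continuous_subtype_val.comp continuous_snd)).matrix_trace

lemma ipM_conjDiag_conjDiag_self (hU : U ∈ orthogonalGroup (Fin n) ℝ) (a b : Fin n → ℝ) :
    ipM (conjDiag U a) (conjDiag U b) = ipV a b := by
  have hU' := (mem_orthogonalGroup_iff' (Fin n) ℝ).1 hU
  calc ipM (conjDiag U a) (conjDiag U b)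
      = (U * (diagonal a * (Uᵀ * U) * diagonal b * Uᵀ)).trace := by
        simp only [ipM, coe_conjDiag, Matrix.mul_assoc]
    _ = (diagonal a * diagonal b * (Uᵀ * U)).trace := by
        rw [trace_mul_comm, hU', Matrix.mul_one, Matrix.mul_assoc, hU']
    _ = ipV a b := by
        rw [hU', Matrix.mul_one, diagonal_mul_diagonal, trace_diagonal]
        rfl

end TraceInnerProduct

section TraceInequalities

lemma dotProduct_mulVec_le_of_mem_doublyStochastic {ι : Type*} [Fintype ι] [DecidableEq ι]
    {D : Matrix ι ι ℝ} (hD : D ∈ doublyStochastic ℝ ι) {a b : ι → ℝ} (hab : Monovary a b) :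
    a ⬝ᵥ D *ᵥ b ≤ a ⬝ᵥ b := by
  have hlin : IsLinearMap ℝ fun M : Matrix ι ι ℝ => a ⬝ᵥ M *ᵥ b :=
    ⟨fun M N => by rw [add_mulVec, dotProduct_add],
      fun r M => by rw [smul_mulVec, dotProduct_smul]⟩
  rw [← SetLike.mem_coe, doublyStochastic_eq_convexHull_permMatrix] at hD
  refine convexHull_min ?_ (convex_halfSpace_le hlin (a ⬝ᵥ b)) hD
  rintro _ ⟨σ, rfl⟩
  rw [Set.mem_ofPred_eq, permMatrix_mulVec]
  exact hab.sum_mul_comp_perm_le_sum_mul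

lemma sq_entries_mem_doublyStochastic {ι : Type*} [Fintype ι] [DecidableEq ι] {W : Matrix ι ι ℝ}
    (hW : W ∈ orthogonalGroup ι ℝ) : (of fun i j => W i j ^ 2) ∈ doublyStochastic ℝ ι := by
  refine mem_doublyStochastic_iff_sum.2 ⟨fun i j => sq_nonneg _, fun i => ?_, fun j => ?_⟩
  · simpa [Matrix.mul_apply, sq] using congrFun₂ ((mem_orthogonalGroup_iff ι ℝ).1 hW) i i
  · simpa [Matrix.mul_apply, sq] using congrFun₂ ((mem_orthogonalGroup_iff' ι ℝ).1 hW) j j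

variable {n : ℕ} {U V : Matrix (Fin n) (Fin n) ℝ} {a b : Fin n → ℝ}

lemma ipM_conjDiag_conjDiag (U V : Matrix (Fin n) (Fin n) ℝ) (a b : Fin n → ℝ) :
    ipM (conjDiag U a) (conjDiag V b) = a ⬝ᵥ (of fun i j => (Uᵀ * V) i j ^ 2) *ᵥ b := by
  have htrace : ipM (conjDiag U a) (conjDiag V b) =
      (diagonal a * ((Uᵀ * V) * diagonal b * (Uᵀ * V)ᵀ)).trace := by
    rw [ipM, coe_conjDiag, coe_conjDiag, Matrix.mul_assoc U, Matrix.mul_assoc U, trace_mul_comm]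
    simp only [transpose_mul, transpose_transpose, Matrix.mul_assoc]
  rw [htrace, trace]
  refine Finset.sum_congr rfl fun i _ => ?_
  rw [diag_apply, diagonal_mul, Matrix.mul_apply]
  refine congrArg (a i * ·) (Finset.sum_congr rfl fun j _ => ?_)
  simp only [mul_diagonal, transpose_apply, of_apply]
  ring

/-- Fan's trace inequality. -/
lemma ipM_conjDiag_conjDiag_le (hU : U ∈ orthogonalGroup (Fin n) ℝ)
    (hV : V ∈ orthogonalGroup (Fin n) ℝ) (hab : Monovary a b) :
    ipM (conjDiag U a) (conjDiag V b) ≤ ipV a b := by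
  rw [ipM_conjDiag_conjDiag]
  exact dotProduct_mulVec_le_of_mem_doublyStochastic
    (sq_entries_mem_doublyStochastic (mul_mem (transpose_mem_orthogonalGroup hU) hV)) hab

/-- The Hoffman–Wielandt inequality. -/
lemma ipV_sub_sub_le_ipM_conjDiag_sub_sub (hU : U ∈ orthogonalGroup (Fin n) ℝ)
    (hV : V ∈ orthogonalGroup (Fin n) ℝ) (hab : Monovary a b) :
    ipV (a - b) (a - b) ≤
      ipM (conjDiag U a - conjDiag V b) (conjDiag U a - conjDiag V b) := by
  rw [isInnerProduct_ipV.sub_self_sub, isInnerProduct_ipM.sub_self_sub,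
    ipM_conjDiag_conjDiag_self hU, ipM_conjDiag_conjDiag_self hV]
  linarith [ipM_conjDiag_conjDiag_le hU hV hab]

end TraceInequalities

section FiberwiseMonotone

variable {ι : Type*} {x y w b : ι → ℝ}

/-- `y` and `w` vary together on each set of indices on which `x` is constant. -/
def MonovaryOnFibers (x y w : ι → ℝ) : Prop :=
  ∀ i j, x i = x j → y i < y j → w i ≤ w j

lemma eventually_add_smul_lt [Finite ι] (x d : ι → ℝ) :
    ∀ᶠ t in 𝓝[>] (0 : ℝ), ∀ i j, x i < x j → (x + t • d) i < (x + t • d) j := by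
  refine eventually_all.2 fun i => eventually_all.2 fun j =>
    eventually_imp_distrib_left.2 fun h => ?_
  have hcont (k : ι) : Tendsto (fun t : ℝ => (x + t • d) k) (𝓝[>] 0) (𝓝 (x k)) := by
    have : Continuous fun t : ℝ => (x + t • d) k := by
      simp only [Pi.add_apply, Pi.smul_apply]; fun_prop
    exact (this.tendsto' 0 (x k) (by simp)).mono_left nhdsWithin_le_nhds
  exact (hcont i).eventually_lt (hcont j) h

lemma eventually_lt_of_add_smul_lt [Finite ι] (d : ι → ℝ)
    (hlt : ∀ i j, x i < x j → b i < b j) (heq : ∀ i j, x i = x j → d i < d j → b i < b j) :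
    ∀ᶠ t in 𝓝[>] (0 : ℝ), ∀ i j, (x + t • d) i < (x + t • d) j → b i < b j := by
  filter_upwards [self_mem_nhdsWithin, eventually_add_smul_lt x d] with t (ht : 0 < t) hx i j hij
  rcases lt_trichotomy (x i) (x j) with h | h | h
  · exact hlt i j h
  · simp only [Pi.add_apply, Pi.smul_apply, smul_eq_mul, h, add_lt_add_iff_left] at hij
    exact heq i j h ((mul_lt_mul_iff_right₀ ht).1 hij)
  · exact absurd hij (hx j i h).not_gt

/-- The vector `x + s • (y + w)` for a small `s > 0` orders the indices compatibly with both
perturbations of `x`. -/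
lemma MonovaryOnFibers.exists_common_order [Finite ι] (h : MonovaryOnFibers x y w) :
    ∃ b : ι → ℝ, ∀ᶠ t in 𝓝[>] (0 : ℝ),
      (∀ i j, (x + t • y) i < (x + t • y) j → b i < b j) ∧
        ∀ i j, (x + t • w) i < (x + t • w) j → b i < b j := by
  obtain ⟨s, hlt, hs⟩ := ((eventually_add_smul_lt x (y + w)).and self_mem_nhdsWithin).exists
  have heq (i j : ι) (hx : x i = x j) (hyw : y i + w i < y j + w j) :
      (x + s • (y + w)) i < (x + s • (y + w)) j := by
    simp only [Pi.add_apply, Pi.smul_apply, smul_eq_mul, hx, add_lt_add_iff_left]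
    exact (mul_lt_mul_iff_right₀ hs).2 hyw
  refine ⟨x + s • (y + w), (eventually_lt_of_add_smul_lt y hlt fun i j hx hy => ?_).and
    (eventually_lt_of_add_smul_lt w hlt fun i j hx hw => ?_)⟩
  · exact heq i j hx (add_lt_add_of_lt_of_le hy (h i j hx hy))
  · refine heq i j hx (add_lt_add_of_le_of_lt (le_of_not_gt fun hy => ?_) hw)
    exact (h j i hx.symm hy).not_gt hw

lemma exists_perm_monovary {n : ℕ} (a b : Fin n → ℝ) :
    ∃ σ : Equiv.Perm (Fin n), Monovary (a ∘ σ) b := by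
  refine ⟨(Tuple.sort b).symm.trans (Tuple.sort a), fun i j hij => ?_⟩
  have hsort : (Tuple.sort b).symm i ≤ (Tuple.sort b).symm j := by
    by_contra! hji
    have := Tuple.monotone_sort b hji.le
    simp only [Function.comp_apply, Equiv.apply_symm_apply] at this
    exact this.not_gt hij
  exact Tuple.monotone_sort a hsort

end FiberwiseMonotone

section EigenvalueDirections

variable {n : ℕ} {U : Matrix (Fin n) (Fin n) ℝ} {x y w : Fin n → ℝ}

lemma exists_eq_conjDiag_add_smul_monovary (K : Sym n) (x b : Fin n → ℝ) {t : ℝ} (ht : t ≠ 0) :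
    ∃ V ∈ orthogonalGroup (Fin n) ℝ, ∃ v : Fin n → ℝ,
      K = conjDiag V (x + t • v) ∧ Monovary (x + t • v) b := by
  obtain ⟨V, hV, hK⟩ := exists_eq_conjDiag_eigval K
  obtain ⟨σ, hσ⟩ := exists_perm_monovary (eigval K.val) b
  refine ⟨V.submatrix id σ, submatrix_perm_mem_orthogonalGroup hV σ,
    t⁻¹ • (eigval K.val ∘ σ - x), ?_, ?_⟩
  · rw [smul_inv_smul₀ ht, add_sub_cancel, conjDiag_submatrix_perm, ← hK]
  · rwa [smul_inv_smul₀ ht, add_sub_cancel]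

/-- Hoffman–Wielandt for `X + t K` against `X + t H`. -/
lemma ipV_sub_sub_le_of_conjDiag_add_smul {V : Matrix (Fin n) (Fin n) ℝ}
    (hU : U ∈ orthogonalGroup (Fin n) ℝ) (hV : V ∈ orthogonalGroup (Fin n) ℝ) {K : Sym n}
    {v : Fin n → ℝ} {t : ℝ} (ht : t ≠ 0) (hK : conjDiag U x + t • K = conjDiag V (x + t • v))
    (hmono : Monovary (x + t • v) (x + t • w)) :
    ipV (v - w) (v - w) ≤ ipM (K - conjDiag U w) (K - conjDiag U w) := by
  have hHW := ipV_sub_sub_le_ipM_conjDiag_sub_sub hV hU hmono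
  rw [← hK, map_add, map_smul, add_sub_add_left_eq_sub, add_sub_add_left_eq_sub, ← smul_sub,
    ← smul_sub t K, isInnerProduct_ipM.smul_self_smul, isInnerProduct_ipV.smul_self_smul] at hHW
  exact le_of_mul_le_mul_left hHW (by positivity)

/-- Hoffman–Wielandt for `X + t K` against `X + s Y`, with `s` fixed as `t ↓ 0`. -/
lemma ipM_sub_ipV_le_of_conjDiag_add_smul {V : Matrix (Fin n) (Fin n) ℝ}
    (hU : U ∈ orthogonalGroup (Fin n) ℝ) (hV : V ∈ orthogonalGroup (Fin n) ℝ) {K : Sym n}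
    {v : Fin n → ℝ} {t s : ℝ} (ht : 0 < t) (hs : 0 < s)
    (hK : conjDiag U x + t • K = conjDiag V (x + t • v))
    (hmono : Monovary (x + t • v) (x + s • y)) :
    2 / t * (ipM (conjDiag U y) K - ipV y v) ≤ s⁻¹ * (ipM K K - ipV v v) := by
  have hHW := ipV_sub_sub_le_ipM_conjDiag_sub_sub hV hU hmono
  rw [← hK, map_add, map_smul, add_sub_add_left_eq_sub, add_sub_add_left_eq_sub,
    isInnerProduct_ipM.sub_self_sub, isInnerProduct_ipV.sub_self_sub,
    isInnerProduct_ipM.smul_self_smul, isInnerProduct_ipV.smul_self_smul,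
    isInnerProduct_ipM.smul_self_smul, isInnerProduct_ipV.smul_self_smul,
    isInnerProduct_ipM.smul_right, isInnerProduct_ipV.smul_right,
    isInnerProduct_ipM.comm (t • K), isInnerProduct_ipV.comm (t • v),
    isInnerProduct_ipM.smul_right, isInnerProduct_ipV.smul_right,
    ipM_conjDiag_conjDiag_self hU] at hHW
  have hmul : 2 * s * t * (ipM (conjDiag U y) K - ipV y v) ≤ t ^ 2 * (ipM K K - ipV v v) := by
    linarith
  rw [div_mul_eq_mul_div, ← div_eq_inv_mul, div_le_div_iff₀ ht hs]
  refine le_of_mul_le_mul_left ?_ ht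
  linarith [hmul]

lemma tendsto_of_ipV_sub_sub_tendsto_zero {α : Type*} {l : Filter α} {f : α → Fin n → ℝ}
    (h : Tendsto (fun a => ipV (f a - w) (f a - w)) l (𝓝 0)) : Tendsto f l (𝓝 w) := by
  refine tendsto_pi_nhds.2 fun i => tendsto_sub_nhds_zero_iff.1 ?_
  refine (tendsto_zero_iff_abs_tendsto_zero _).2 (squeeze_zero (fun _ => abs_nonneg _) (fun a => ?_)
    (Real.sqrt_zero ▸ h.sqrt))
  refine Real.abs_le_sqrt ?_
  rw [sq]
  exact Finset.single_le_sum (f := fun j => (f a - w) j * (f a - w) j)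
    (fun j _ => mul_self_nonneg _) (Finset.mem_univ i)

lemma MonovaryOnFibers.eventually_exists_eigenvalue_direction (h : MonovaryOnFibers x y w)
    (hU : U ∈ orthogonalGroup (Fin n) ℝ) :
    ∃ s : ℝ, ∀ᶠ t in 𝓝[>] (0 : ℝ), ∀ K : Sym n,
      ∃ V ∈ orthogonalGroup (Fin n) ℝ, ∃ v : Fin n → ℝ,
        conjDiag U x + t • K = conjDiag V (x + t • v) ∧
        ipV (v - w) (v - w) ≤ ipM (K - conjDiag U w) (K - conjDiag U w) ∧
        2 / t * (ipM (conjDiag U y) K - ipV y v) ≤ s * (ipM K K - ipV v v) := by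
  obtain ⟨b, hb⟩ := h.exists_common_order
  obtain ⟨s, ⟨hsb, -⟩, hs⟩ := (hb.and self_mem_nhdsWithin).exists
  refine ⟨s⁻¹, ?_⟩
  filter_upwards [hb, self_mem_nhdsWithin] with t htb (ht : 0 < t) K
  obtain ⟨V, hV, v, hK, hvb⟩ :=
    exists_eq_conjDiag_add_smul_monovary (conjDiag U x + t • K) x b ht.ne'
  exact ⟨V, hV, v, hK,
    ipV_sub_sub_le_of_conjDiag_add_smul hU hV ht.ne' hK fun i j hij => hvb (htb.2 i j hij),
    ipM_sub_ipV_le_of_conjDiag_add_smul hU hV ht hs hK fun i j hij => hvb (hsb i j hij)⟩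

end EigenvalueDirections

section CommonDiagonalization

variable {n : ℕ} {θ : (Fin n → ℝ) → EReal} {U : Matrix (Fin n) (Fin n) ℝ} {x y w : Fin n → ℝ}

lemma MonovaryOnFibers.epiLE_sdq2_specFn (h : MonovaryOnFibers x y w) (hθ : SymmetricFn θ)
    (hU : U ∈ orthogonalGroup (Fin n) ℝ) (hx : IsFiniteAt θ x) :
    EpiLE (sdq2 ipV θ x y) w 0
      (sdq2 ipM (specFn θ) (conjDiag U x) (conjDiag U y)) (conjDiag U w) := by
  obtain ⟨s, hdir⟩ := h.eventually_exists_eigenvalue_direction hU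
  have hchoice : ∀ᶠ p : ℝ × Sym n in 𝓝[>] 0 ×ˢ 𝓝 (conjDiag U w), ∃ v : Fin n → ℝ,
      specFn θ (conjDiag U x + p.1 • p.2) = θ (x + p.1 • v) ∧
      ipV (v - w) (v - w) ≤ ipM (p.2 - conjDiag U w) (p.2 - conjDiag U w) ∧
      2 / p.1 * (ipM (conjDiag U y) p.2 - ipV y v) ≤ s * (ipM p.2 p.2 - ipV v v) := by
    filter_upwards [tendsto_fst.eventually hdir] with p hp
    obtain ⟨V, hV, v, hK, hbounds⟩ := hp p.2
    exact ⟨v, by rw [hK, specFn_conjDiag hθ hV], hbounds⟩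
  obtain ⟨Φ, hΦ⟩ := hchoice.choice
  have hipM : Tendsto (fun p : ℝ × Sym n => ipM (p.2 - conjDiag U w) (p.2 - conjDiag U w))
      (𝓝[>] 0 ×ˢ 𝓝 (conjDiag U w)) (𝓝 0) :=
    ((isInnerProduct_ipM.continuous_self.comp (continuous_id.sub continuous_const)).tendsto'
      (conjDiag U w) 0 (by simp [isInnerProduct_ipM.zero_right])).comp tendsto_snd
  have hΦw : Tendsto Φ (𝓝[>] 0 ×ˢ 𝓝 (conjDiag U w)) (𝓝 w) :=
    tendsto_of_ipV_sub_sub_tendsto_zero (tendsto_of_tendsto_of_tendsto_of_le_of_le'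
      tendsto_const_nhds hipM (.of_forall fun p => Finset.sum_nonneg fun i _ => mul_self_nonneg _)
      (hΦ.mono fun p hp => hp.2.1))
  refine ⟨Φ, fun p => -(s * (ipM p.2 p.2 - ipV (Φ p) (Φ p))), hΦw, ?_, ?_⟩
  · have hlim := ((((isInnerProduct_ipM.continuous_self.tendsto (conjDiag U w)).comp
      tendsto_snd).sub ((isInnerProduct_ipV.continuous_self.tendsto w).comp hΦw)).const_mul s).neg
    rwa [ipM_conjDiag_conjDiag_self hU, sub_self, mul_zero, neg_zero] at hlim
  · filter_upwards [hΦ, tendsto_fst.eventually self_mem_nhdsWithin] with p hp (ht : 0 < p.1)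
    rw [sdq2_eq_sdq2_add (ip := ipV) hx ht (specFn_conjDiag hθ hU x) hp.1]
    gcongr
    linarith [hp.2.2]

lemma epiLE_sdq2_conjDiag (hθ : SymmetricFn θ) (hU : U ∈ orthogonalGroup (Fin n) ℝ)
    (hx : IsFiniteAt θ x) (y w : Fin n → ℝ) :
    EpiLE (sdq2 ipM (specFn θ) (conjDiag U x) (conjDiag U y)) (conjDiag U w) 0
      (sdq2 ipV θ x y) w := by
  refine ⟨fun p => conjDiag U p.2, fun _ => 0,
    ((conjDiag U).continuous.tendsto w).comp tendsto_snd, tendsto_const_nhds, ?_⟩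
  filter_upwards [tendsto_fst.eventually self_mem_nhdsWithin] with p (ht : 0 < p.1)
  rw [sdq2_eq_sdq2_add (ip := ipV) (w := p.2) (v := y) hx ht (specFn_conjDiag hθ hU x)
    (by rw [← map_smul, ← map_add, specFn_conjDiag hθ hU]), ipM_conjDiag_conjDiag_self hU]
  simp

end CommonDiagonalization

section MatrixExponential

attribute [local instance] Matrix.linftyOpNormedRing Matrix.linftyOpNormedAlgebra

variable {ι : Type*} [Fintype ι] [DecidableEq ι] {A : Matrix ι ι ℝ}

lemma exp_mem_orthogonalGroup (hA : Aᵀ = -A) : NormedSpace.exp A ∈ orthogonalGroup ι ℝ := by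
  rw [mem_orthogonalGroup_iff, ← exp_transpose, hA, exp_neg]
  exact mul_nonsing_inv _ ((isUnit_iff_isUnit_det _).1 (isUnit_exp A))

lemma exp_smul_mem_orthogonalGroup (hA : Aᵀ = -A) (t : ℝ) :
    NormedSpace.exp (t • A) ∈ orthogonalGroup ι ℝ :=
  exp_mem_orthogonalGroup (by rw [transpose_smul, hA, smul_neg])

lemma hasDerivAt_exp_smul_zero (A : Matrix ι ι ℝ) :
    HasDerivAt (fun t : ℝ => NormedSpace.exp (t • A)) A 0 := by
  have h := hasDerivAt_exp_smul_const (𝕂 := ℝ) A (0 : ℝ)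
  rwa [zero_smul, NormedSpace.exp_zero, one_mul] at h

/-- The difference quotient `(exp (t A) - 1) / t`. -/
def expSlope (A : Matrix ι ι ℝ) (t : ℝ) : Matrix ι ι ℝ :=
  t⁻¹ • (NormedSpace.exp (t • A) - 1)

lemma exp_smul_eq_one_add_smul_expSlope {t : ℝ} (ht : t ≠ 0) :
    NormedSpace.exp (t • A) = 1 + t • expSlope A t := by
  rw [expSlope, smul_inv_smul₀ ht, add_sub_cancel]

lemma tendsto_expSlope (A : Matrix ι ι ℝ) : Tendsto (expSlope A) (𝓝[>] 0) (𝓝 A) := by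
  have hslope := (hasDerivAt_exp_smul_zero A).tendsto_slope.mono_left (nhdsGT_le_nhdsNE 0)
  refine hslope.congr fun t => ?_
  rw [slope_def_module, sub_zero, zero_smul, NormedSpace.exp_zero, expSlope]

lemma hasDerivAt_trace_mul_exp_conj (hA : Aᵀ = -A) (Y H : Matrix ι ι ℝ) :
    HasDerivAt (fun t : ℝ =>
      (Y * (NormedSpace.exp (t • A) * H * (NormedSpace.exp (t • A))ᵀ)).trace)
      (Y * (A * H - H * A)).trace 0 := by
  have hexp := hasDerivAt_exp_smul_zero A
  have hexpT : HasDerivAt (fun t : ℝ => (NormedSpace.exp (t • A))ᵀ) (-A) 0 := by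
    simpa only [← exp_transpose, transpose_smul, hA] using hasDerivAt_exp_smul_zero (-A)
  have hconj := ((hexp.mul_const H).mul hexpT).const_mul Y
  simp only [zero_smul, NormedSpace.exp_zero, transpose_one, Matrix.mul_one, Matrix.one_mul,
    Matrix.mul_neg, ← sub_eq_add_neg] at hconj
  exact (traceLinearMap ι ℝ ℝ).toContinuousLinearMap.hasFDerivAt.comp_hasDerivAt 0 hconj

/-- Conjugating `H` by `exp (t • ⁅Y, H⁆)` increases `tr (Y H)` at the rate `‖⁅Y, H⁆‖²`. -/
lemma exists_orthogonal_trace_lt_of_not_commute {X Y H : Matrix ι ι ℝ} (hY : Y.IsSymm)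
    (hH : H.IsSymm) (hXY : Commute X Y) (hXH : Commute X H) (hYH : ¬Commute Y H) :
    ∃ R ∈ orthogonalGroup ι ℝ, Commute X R ∧ (Y * H).trace < (Y * (R * H * Rᵀ)).trace := by
  set A := Y * H - H * Y with hA
  have hAT : Aᵀ = -A := by
    rw [hA, transpose_sub, transpose_mul, transpose_mul, hY, hH, neg_sub]
  have hXA : Commute X A := (hXY.mul_right hXH).sub_right (hXH.mul_right hXY)
  have hrate : (Y * (A * H - H * A)).trace = (Aᵀ * A).trace := by
    rw [hAT, Matrix.mul_sub, trace_sub, trace_mul_comm Y, Matrix.mul_assoc, trace_mul_comm A,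
      ← Matrix.mul_assoc Y, ← trace_sub, ← Matrix.sub_mul, ← neg_sub (Y * H), ← hA]
  have hpos : 0 < (Y * (A * H - H * A)).trace :=
    hrate ▸ trace_transpose_mul_self_pos (sub_ne_zero.2 hYH)
  have hslope := (hasDerivAt_trace_mul_exp_conj hAT Y H).tendsto_slope.eventually_const_lt hpos
  obtain ⟨t, htslope, ht⟩ := ((hslope.filter_mono (nhdsGT_le_nhdsNE 0)).and
    self_mem_nhdsWithin).exists
  refine ⟨_, exp_smul_mem_orthogonalGroup hAT t, (hXA.smul_right t).exp_right, ?_⟩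
  rw [slope_def_field, sub_zero] at htslope
  simpa using (div_pos_iff_of_pos_right ht).1 htslope

end MatrixExponential

section InfiniteDirections

variable {n : ℕ} {θ : (Fin n → ℝ) → EReal} {U : Matrix (Fin n) (Fin n) ℝ} {x y w : Fin n → ℝ}
  {X Y H : Sym n}

lemma lowerEpiLimit_sdq2_specFn_eq_top_of_not_commute (hθ : SymmetricFn θ)
    (hY : RegSubgrad ipM (specFn θ) X Y) (hXY : Commute X.val Y.val) (hXH : Commute X.val H.val)
    (hYH : ¬Commute Y.val H.val) :
    lowerEpiLimit (sdq2 ipM (specFn θ) X Y) H = ⊤ := by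
  obtain ⟨R, hR, hXR, hlt⟩ := exists_orthogonal_trace_lt_of_not_commute Y.2 H.2 hXY hXH hYH
  refine lowerEpiLimit_sdq2_eq_top_of_invariant isInnerProduct_ipM hY (L := conjSym R)
    (specFn_conjSym hθ hR) (Subtype.ext ?_) hlt
  rw [coe_conjSym, ← hXR.eq, Matrix.mul_assoc, (mem_orthogonalGroup_iff (Fin n) ℝ).1 hR,
    Matrix.mul_one]

lemma ipV_lt_ipV_comp_swap {i j : Fin n} (hy : y i < y j) (hw : w j < w i) :
    ipV y w < ipV y (w ∘ Equiv.swap i j) := by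
  have hij : i ≠ j := fun h => hy.ne (congrArg y h)
  have hsplit (z : Fin n → ℝ) :
      ipV y z = y i * z i + (y j * z j + ∑ k ∈ ({i, j}ᶜ : Finset (Fin n)), y k * z k) := by
    rw [ipV, ← Finset.sum_add_sum_compl {i, j}, Finset.sum_pair hij, add_assoc]
  have hrest : ∑ k ∈ ({i, j}ᶜ : Finset (Fin n)), y k * (w ∘ Equiv.swap i j) k =
      ∑ k ∈ ({i, j}ᶜ : Finset (Fin n)), y k * w k := by
    refine Finset.sum_congr rfl fun k hk => ?_
    simp only [Finset.mem_compl, Finset.mem_insert, Finset.mem_singleton, not_or] at hk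
    rw [Function.comp_apply, Equiv.swap_apply_of_ne_of_ne hk.1 hk.2]
  rw [hsplit, hsplit, hrest]
  simp only [Function.comp_apply, Equiv.swap_apply_left, Equiv.swap_apply_right]
  nlinarith

lemma conjSym_submatrix_perm_conjDiag (hU : U ∈ orthogonalGroup (Fin n) ℝ)
    (σ : Equiv.Perm (Fin n)) (a : Fin n → ℝ) :
    conjSym (U.submatrix id σ * Uᵀ) (conjDiag U a) = conjDiag U (a ∘ σ.symm) := by
  rw [conjSym_conjDiag, Matrix.mul_assoc, (mem_orthogonalGroup_iff' (Fin n) ℝ).1 hU,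
    Matrix.mul_one, ← conjDiag_submatrix_perm U _ σ, Function.comp_assoc, Equiv.symm_comp_self,
    Function.comp_id]

lemma lowerEpiLimit_sdq2_specFn_eq_top_of_not_monovaryOnFibers (hθ : SymmetricFn θ)
    (hU : U ∈ orthogonalGroup (Fin n) ℝ)
    (hY : RegSubgrad ipM (specFn θ) (conjDiag U x) (conjDiag U y)) (h : ¬MonovaryOnFibers x y w) :
    lowerEpiLimit (sdq2 ipM (specFn θ) (conjDiag U x) (conjDiag U y)) (conjDiag U w) = ⊤ := by
  obtain ⟨i, j, hx, hy, hw⟩ : ∃ i j, x i = x j ∧ y i < y j ∧ w j < w i := by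
    simpa [MonovaryOnFibers] using h
  have hR := mul_mem (submatrix_perm_mem_orthogonalGroup hU (Equiv.swap i j))
    (transpose_mem_orthogonalGroup hU)
  refine lowerEpiLimit_sdq2_eq_top_of_invariant isInnerProduct_ipM hY
    (specFn_conjSym hθ hR) ?_ ?_
  · rw [conjSym_submatrix_perm_conjDiag hU, Equiv.symm_swap, Equiv.comp_swap_eq_update, hx,
      Function.update_eq_self, ← hx, Function.update_eq_self]
  · rw [conjSym_submatrix_perm_conjDiag hU, Equiv.symm_swap, ipM_conjDiag_conjDiag_self hU,
      ipM_conjDiag_conjDiag_self hU]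
    exact ipV_lt_ipV_comp_swap hy hw

lemma epiConvergesAt_sdq2_conjDiag_iff (hθ : SymmetricFn θ) (hU : U ∈ orthogonalGroup (Fin n) ℝ)
    (hY : RegSubgrad ipM (specFn θ) (conjDiag U x) (conjDiag U y)) :
    EpiConvergesAt (sdq2 ipM (specFn θ) (conjDiag U x) (conjDiag U y)) (conjDiag U w) ↔
      EpiConvergesAt (sdq2 ipV θ x y) w := by
  have hx : IsFiniteAt θ x := by simpa only [IsFiniteAt, specFn_conjDiag hθ hU] using hY.1
  have hembed := epiLE_sdq2_conjDiag hθ hU hx y w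
  by_cases h : MonovaryOnFibers x y w
  · exact hembed.epiConvergesAt_iff (neg_zero (G := ℝ).symm ▸ h.epiLE_sdq2_specFn hθ hU hx)
  · have htop := lowerEpiLimit_sdq2_specFn_eq_top_of_not_monovaryOnFibers hθ hU hY h
    refine iff_of_true (epiConvergesAt_of_lowerEpiLimit_eq_top htop)
      (epiConvergesAt_of_lowerEpiLimit_eq_top (top_le_iff.1 ?_))
    simpa [htop] using hembed.lowerEpiLimit_add_le

end InfiniteDirections

section CommutatorTraces

variable {ι : Type*} [Fintype ι] {X Y D : Matrix ι ι ℝ}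

lemma trace_mul_commutator_eq_zero (hXY : Commute X Y) (B : Matrix ι ι ℝ) :
    (Y * (B * X - X * B)).trace = 0 := by
  rw [Matrix.mul_sub, trace_sub, ← Matrix.mul_assoc, trace_mul_comm, ← Matrix.mul_assoc,
    ← Matrix.mul_assoc, hXY.eq, sub_self]

lemma trace_mul_mul_transpose_of_isSymm (hY : Y.IsSymm) (hD : D.IsSymm) (A : Matrix ι ι ℝ) :
    (Y * (D * Aᵀ)).trace = (Y * (A * D)).trace := by
  rw [← trace_transpose, transpose_mul, transpose_mul, transpose_transpose, hY, hD, trace_mul_comm]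

end CommutatorTraces

section Rotation

variable {n : ℕ} {θ : (Fin n → ℝ) → EReal} {A B R : Matrix (Fin n) (Fin n) ℝ} {X Y H H₀ K : Sym n}
  {t : ℝ}

/-- The direction in which `X + t K` lies from `X` after conjugation by `R`: the solution `K'` of
`X + t K' = R (X + t K) Rᵀ`. -/
def conjDirection (X : Sym n) (R : Matrix (Fin n) (Fin n) ℝ) (t : ℝ) (K : Sym n) : Sym n :=
  t⁻¹ • (conjSym R (X + t • K) - X)

lemma add_smul_conjDirection (ht : t ≠ 0) :
    X + t • conjDirection X R t K = conjSym R (X + t • K) := by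
  rw [conjDirection, smul_inv_smul₀ ht, add_sub_cancel]

lemma coe_conjDirection (ht : t ≠ 0) (hR : R ∈ orthogonalGroup (Fin n) ℝ) (hRB : R = 1 + t • B) :
    (conjDirection X R t K).val = (B * X.val - X.val * B) * Rᵀ + R * K.val * Rᵀ := by
  have hX : R * X.val * Rᵀ - X.val = t • ((B * X.val - X.val * B) * Rᵀ) := by
    calc R * X.val * Rᵀ - X.val = (R * X.val - X.val * R) * Rᵀ := by
          rw [Matrix.sub_mul, Matrix.mul_assoc X.val, (mem_orthogonalGroup_iff (Fin n) ℝ).1 hR,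
            Matrix.mul_one]
      _ = t • ((B * X.val - X.val * B) * Rᵀ) := by
          rw [← Matrix.smul_mul, hRB]
          congr 1
          simp only [Matrix.add_mul, Matrix.mul_add, Matrix.one_mul, Matrix.mul_one,
            Matrix.smul_mul, Matrix.mul_smul]
          module
  calc (conjDirection X R t K).val
      = t⁻¹ • (R * (X.val + t • K.val) * Rᵀ - X.val) := rfl
    _ = t⁻¹ • (t • ((B * X.val - X.val * B) * Rᵀ) + t • (R * K.val * Rᵀ)) := by
        rw [← hX, Matrix.mul_add, Matrix.add_mul, Matrix.mul_smul, Matrix.smul_mul,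
          add_sub_right_comm]
    _ = (B * X.val - X.val * B) * Rᵀ + R * K.val * Rᵀ := by rw [← smul_add, inv_smul_smul₀ ht]

lemma ipM_conjDirection_sub (ht : t ≠ 0) (hR : R ∈ orthogonalGroup (Fin n) ℝ)
    (hRB : R = 1 + t • B) (hXY : Commute X.val Y.val) :
    2 / t * (ipM Y (conjDirection X R t K) - ipM Y K) =
      2 * (Y.val * ((B * X.val - X.val * B) * Bᵀ + (B * K.val + K.val * Bᵀ) +
        t • (B * K.val * Bᵀ))).trace := by
  have hexpand : (B * X.val - X.val * B) * Rᵀ + R * K.val * Rᵀ =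
      (B * X.val - X.val * B) + K.val + t • ((B * X.val - X.val * B) * Bᵀ +
        (B * K.val + K.val * Bᵀ) + t • (B * K.val * Bᵀ)) := by
    rw [hRB, transpose_add, transpose_one, transpose_smul]
    simp only [Matrix.add_mul, Matrix.mul_add, Matrix.one_mul, Matrix.mul_one, Matrix.smul_mul,
      Matrix.mul_smul]
    module
  rw [ipM, coe_conjDirection ht hR hRB, hexpand, Matrix.mul_add Y.val, Matrix.mul_add Y.val,
    trace_add, trace_add, trace_mul_commutator_eq_zero hXY, Matrix.mul_smul, trace_smul,
    smul_eq_mul, ipM]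
  field_simp
  ring

lemma tendsto_prodMk_expSlope (A : Matrix (Fin n) (Fin n) ℝ) (H₀ : Sym n) :
    Tendsto (fun p : ℝ × Sym n => (p.1, expSlope A p.1, p.2)) (𝓝[>] 0 ×ˢ 𝓝 H₀)
      (𝓝 (0, A, H₀)) :=
  (tendsto_fst.mono_right nhdsWithin_le_nhds).prodMk_nhds
    (((tendsto_expSlope A).comp tendsto_fst).prodMk_nhds tendsto_snd)

lemma tendsto_conjDirection_exp (hA : Aᵀ = -A) (hH : H.val = A * X.val - X.val * A + H₀.val) :
    Tendsto (fun p : ℝ × Sym n => conjDirection X (NormedSpace.exp (p.1 • A)) p.1 p.2)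
      (𝓝[>] 0 ×ˢ 𝓝 H₀) (𝓝 H) := by
  have hcont : Continuous fun q : ℝ × Matrix (Fin n) (Fin n) ℝ × Sym n =>
      (q.2.1 * X.val - X.val * q.2.1) * (1 + q.1 • q.2.1)ᵀ +
        (1 + q.1 • q.2.1) * q.2.2.val * (1 + q.1 • q.2.1)ᵀ := by
    fun_prop
  have hlim := (hcont.tendsto' (0, A, H₀) H.val (by simp [hH])).comp (tendsto_prodMk_expSlope A H₀)
  refine tendsto_subtype_rng.2 (hlim.congr' ?_)
  filter_upwards [tendsto_fst.eventually self_mem_nhdsWithin] with p (ht : 0 < p.1)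
  rw [coe_conjDirection ht.ne' (exp_smul_mem_orthogonalGroup hA p.1)
    (exp_smul_eq_one_add_smul_expSlope ht.ne'), Function.comp_apply,
    exp_smul_eq_one_add_smul_expSlope ht.ne']

lemma tendsto_ipM_conjDirection_exp_sub (hA : Aᵀ = -A) (hXY : Commute X.val Y.val)
    (hH : H.val = A * X.val - X.val * A + H₀.val) :
    Tendsto (fun p : ℝ × Sym n =>
      2 / p.1 * (ipM Y (conjDirection X (NormedSpace.exp (p.1 • A)) p.1 p.2) - ipM Y p.2))
      (𝓝[>] 0 ×ˢ 𝓝 H₀) (𝓝 (2 * (Y.val * (A * (H.val + H₀.val))).trace)) := by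
  have hcont : Continuous fun q : ℝ × Matrix (Fin n) (Fin n) ℝ × Sym n =>
      2 * (Y.val * ((q.2.1 * X.val - X.val * q.2.1) * q.2.1ᵀ +
        (q.2.1 * q.2.2.val + q.2.2.val * q.2.1ᵀ) + q.1 • (q.2.1 * q.2.2.val * q.2.1ᵀ))).trace := by
    fun_prop
  have hD : (A * X.val - X.val * A).IsSymm := by
    rw [eq_sub_of_add_eq hH.symm]
    exact (H - H₀).2
  have hvalue : 2 * (Y.val * ((A * X.val - X.val * A) * Aᵀ + (A * H₀.val + H₀.val * Aᵀ) +
      (0 : ℝ) • (A * H₀.val * Aᵀ))).trace = 2 * (Y.val * (A * (H.val + H₀.val))).trace := by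
    simp only [zero_smul, add_zero, Matrix.mul_add, trace_add,
      trace_mul_mul_transpose_of_isSymm Y.2 hD, trace_mul_mul_transpose_of_isSymm Y.2 H₀.2, hH]
    ring
  refine ((hcont.tendsto' (0, A, H₀) _ hvalue).comp (tendsto_prodMk_expSlope A H₀)).congr' ?_
  filter_upwards [tendsto_fst.eventually self_mem_nhdsWithin] with p (ht : 0 < p.1)
  exact (ipM_conjDirection_sub ht.ne' (exp_smul_mem_orthogonalGroup hA p.1)
    (exp_smul_eq_one_add_smul_expSlope ht.ne') hXY).symm

lemma epiLE_sdq2_specFn_of_eq_commutator_add (hθ : SymmetricFn θ) (hX : IsFiniteAt (specFn θ) X)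
    (hXY : Commute X.val Y.val) (hA : Aᵀ = -A) (hH : H.val = A * X.val - X.val * A + H₀.val) :
    EpiLE (sdq2 ipM (specFn θ) X Y) H (2 * (Y.val * (A * (H.val + H₀.val))).trace)
      (sdq2 ipM (specFn θ) X Y) H₀ := by
  refine ⟨_, _, tendsto_conjDirection_exp hA hH, tendsto_ipM_conjDirection_exp_sub hA hXY hH, ?_⟩
  filter_upwards [tendsto_fst.eventually self_mem_nhdsWithin] with p (ht : 0 < p.1)
  have hrot : specFn θ (X + p.1 • conjDirection X (NormedSpace.exp (p.1 • A)) p.1 p.2) =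
      specFn θ (X + p.1 • p.2) := by
    rw [add_smul_conjDirection ht.ne', specFn_conjSym hθ (exp_smul_mem_orthogonalGroup hA p.1)]
  rw [sdq2_eq_sdq2_add (ip := ipM) hX ht rfl hrot, add_assoc, ← EReal.coe_add, ← mul_add,
    sub_add_sub_cancel, sub_self, mul_zero, EReal.coe_zero, add_zero]

lemma epiConvergesAt_sdq2_specFn_iff_of_eq_commutator_add (hθ : SymmetricFn θ)
    (hX : IsFiniteAt (specFn θ) X) (hXY : Commute X.val Y.val) (hA : Aᵀ = -A)
    (hH : H.val = A * X.val - X.val * A + H₀.val) :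
    EpiConvergesAt (sdq2 ipM (specFn θ) X Y) H ↔ EpiConvergesAt (sdq2 ipM (specFn θ) X Y) H₀ := by
  have hH₀ : H₀.val = -A * X.val - X.val * -A + H.val := by
    rw [hH, Matrix.neg_mul, Matrix.mul_neg]
    abel
  have hA' : (-A)ᵀ = - -A := by rw [transpose_neg, hA]
  have hback := epiLE_sdq2_specFn_of_eq_commutator_add hθ hX hXY hA' hH₀
  rw [Matrix.neg_mul, Matrix.mul_neg, trace_neg, mul_neg, add_comm] at hback
  exact (epiLE_sdq2_specFn_of_eq_commutator_add hθ hX hXY hA hH).epiConvergesAt_iff hback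

end Rotation

section CommutantOfDiagonal

variable {ι κ : Type*} [Fintype ι] [DecidableEq ι] [DecidableEq κ]

lemma commute_diagonal_iff {R : Type*} [CommRing R] [IsDomain R] {x : ι → R} {S : Matrix ι ι R} :
    Commute (diagonal x) S ↔ ∀ i j, x i ≠ x j → S i j = 0 := by
  simp only [commute_iff_eq, ← Matrix.ext_iff, diagonal_mul, mul_diagonal]
  refine forall₂_congr fun i j => ?_
  rw [mul_comm (S i j), mul_eq_mul_right_iff, or_iff_not_imp_left]

lemma exists_commutator_diagonal_add (x : ι → ℝ) {P : Matrix ι ι ℝ} (hP : P.IsSymm) :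
    ∃ B S : Matrix ι ι ℝ, Bᵀ = -B ∧ S.IsSymm ∧ Commute (diagonal x) S ∧
      P = B * diagonal x - diagonal x * B + S := by
  refine ⟨of fun i j => if x i = x j then 0 else P i j / (x j - x i),
    of fun i j => if x i = x j then P i j else 0, ?_, ?_, ?_, ?_⟩
  · ext i j
    simp only [transpose_apply, Matrix.neg_apply, of_apply, hP.apply i j, eq_comm (a := x j)]
    split_ifs
    · rw [neg_zero]
    · rw [← div_neg, neg_sub]
  · ext i j
    simp only [transpose_apply, of_apply, hP.apply i j, eq_comm (a := x j)]
  · exact commute_diagonal_iff.2 fun i j hij => if_neg hij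
  · ext i j
    simp only [Matrix.add_apply, Matrix.sub_apply, mul_diagonal, diagonal_mul, of_apply]
    split_ifs with hij
    · simp
    · have : x j - x i ≠ 0 := sub_ne_zero.2 (Ne.symm hij)
      field_simp
      ring

lemma commute_diagonal_transpose_conj {U H : Matrix ι ι ℝ} {x : ι → ℝ}
    (hU : U ∈ orthogonalGroup ι ℝ) (h : Commute (U * diagonal x * Uᵀ) H) :
    Commute (diagonal x) (Uᵀ * H * U) := by
  have hU' := (mem_orthogonalGroup_iff' ι ℝ).1 hU
  have hconj := commute_conj_conj (transpose_mem_orthogonalGroup hU) h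
  rwa [transpose_transpose, ← Matrix.mul_assoc, ← Matrix.mul_assoc, hU', Matrix.one_mul,
    Matrix.mul_assoc _ Uᵀ, hU', Matrix.mul_one] at hconj

lemma conj_transpose_conj {U : Matrix ι ι ℝ} (hU : U ∈ orthogonalGroup ι ℝ) (H : Matrix ι ι ℝ) :
    U * (Uᵀ * H * U) * Uᵀ = H := by
  have hU' := (mem_orthogonalGroup_iff ι ℝ).1 hU
  calc U * (Uᵀ * H * U) * Uᵀ = U * Uᵀ * H * (U * Uᵀ) := by simp only [Matrix.mul_assoc]
    _ = H := by rw [hU', Matrix.one_mul, Matrix.mul_one]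

lemma conj_diagonal_eq_self_of_commute {V : Matrix ι ι ℝ} {x : ι → ℝ}
    (hV : V ∈ orthogonalGroup ι ℝ) (h : Commute (diagonal x) V) :
    V * diagonal x * Vᵀ = diagonal x := by
  rw [← h.eq, Matrix.mul_assoc, (mem_orthogonalGroup_iff ι ℝ).1 hV, Matrix.mul_one]

lemma blockDiagonal'_blockDiag'_of_offDiag_eq_zero {R : Type*} [Zero R] {β : κ → Type*}
    {T : Matrix (Σ k, β k) (Σ k, β k) R} (hT : ∀ p q, p.1 ≠ q.1 → T p q = 0) :
    blockDiagonal' (blockDiag' T) = T := by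
  ext ⟨k, a⟩ ⟨l, b⟩
  by_cases hkl : k = l
  · subst hkl
    rw [blockDiagonal'_apply_eq, blockDiag'_apply]
  · rw [blockDiagonal'_apply_ne _ _ _ hkl, hT _ _ hkl]

variable [Fintype κ]

lemma blockDiagonal'_mem_orthogonalGroup {β : κ → Type*} [∀ k, Fintype (β k)]
    [∀ k, DecidableEq (β k)] {V : ∀ k, Matrix (β k) (β k) ℝ}
    (hV : ∀ k, V k ∈ orthogonalGroup (β k) ℝ) :
    blockDiagonal' V ∈ orthogonalGroup (Σ k, β k) ℝ := by
  have hV' (k : κ) : V k * (V k)ᵀ = 1 := (mem_orthogonalGroup_iff (β k) ℝ).1 (hV k)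
  rw [mem_orthogonalGroup_iff, blockDiagonal'_transpose, ← blockDiagonal'_mul]
  simp only [hV']
  exact blockDiagonal'_one

lemma exists_blockDiagonal'_conj_diagonal {β : κ → Type*} [∀ k, Fintype (β k)]
    [∀ k, DecidableEq (β k)] {T : Matrix (Σ k, β k) (Σ k, β k) ℝ} (hT : T.IsHermitian)
    (hT₀ : ∀ p q, p.1 ≠ q.1 → T p q = 0) :
    ∃ (V : ∀ k, Matrix (β k) (β k) ℝ) (w : (Σ k, β k) → ℝ), (∀ k, V k ∈ orthogonalGroup (β k) ℝ) ∧
      T = blockDiagonal' V * diagonal w * (blockDiagonal' V)ᵀ := by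
  have hblock (k : κ) : (blockDiag' T k).IsHermitian := hT.submatrix (Sigma.mk k)
  choose V hV hTV using fun k => exists_mem_orthogonalGroup_eq_conj_eigenvalues (hblock k)
  refine ⟨V, fun p => (hblock p.1).eigenvalues p.2, hV, ?_⟩
  calc T = blockDiagonal' (blockDiag' T) := (blockDiagonal'_blockDiag'_of_offDiag_eq_zero hT₀).symm
    _ = blockDiagonal' fun k => V k * diagonal (hblock k).eigenvalues * (V k)ᵀ :=
        congrArg _ (funext hTV)
    _ = _ := by
        rw [blockDiagonal'_mul, blockDiagonal'_mul, blockDiagonal'_diagonal,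
          blockDiagonal'_transpose]

lemma exists_orthogonal_conj_diagonal_of_fibers {κ : Type*} (c : ι → κ) {S : Matrix ι ι ℝ}
    (hS : S.IsHermitian) (hS₀ : ∀ i j, c i ≠ c j → S i j = 0) :
    ∃ V ∈ orthogonalGroup ι ℝ, (∀ i j, c i ≠ c j → V i j = 0) ∧
      ∃ w, S = V * diagonal w * Vᵀ := by
  classical
  set e := Equiv.sigmaFiberEquiv (Set.rangeFactorization c)
  have hfst (p : Σ k, {i // Set.rangeFactorization c i = k}) : c (e p) = p.1 :=
    congrArg Subtype.val p.2.2
  obtain ⟨V, w, hV, hSV⟩ := exists_blockDiagonal'_conj_diagonal (hS.submatrix e) fun p q hpq =>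
    hS₀ _ _ (by rwa [hfst, hfst, Ne, ← Subtype.ext_iff])
  refine ⟨(blockDiagonal' V).submatrix e.symm e.symm, ?_, fun i j hij => ?_, w ∘ e.symm, ?_⟩
  · rw [mem_orthogonalGroup_iff, transpose_submatrix, submatrix_mul_equiv,
      (mem_orthogonalGroup_iff _ ℝ).1 (blockDiagonal'_mem_orthogonalGroup hV),
      submatrix_one_equiv]
  · exact blockDiagonal'_apply_ne V _ _ fun h => hij (congrArg Subtype.val h)
  · rw [← submatrix_diagonal_equiv, transpose_submatrix, submatrix_mul_equiv,
      submatrix_mul_equiv, ← hSV, submatrix_submatrix, e.self_comp_symm, submatrix_id_id]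

end CommutantOfDiagonal

section Decomposition

variable {n : ℕ} {U : Matrix (Fin n) (Fin n) ℝ} {x y : Fin n → ℝ}

lemma exists_simultaneous_conjDiag (hU : U ∈ orthogonalGroup (Fin n) ℝ) {H : Sym n}
    (hx : Commute (conjDiag U x).val H.val) (hy : Commute (conjDiag U y).val H.val) :
    ∃ U' ∈ orthogonalGroup (Fin n) ℝ, conjDiag U' x = conjDiag U x ∧
      conjDiag U' y = conjDiag U y ∧ ∃ w, H = conjDiag U' w := by
  have hc (i j : Fin n) : (x i, y i) ≠ (x j, y j) ↔ x i ≠ x j ∨ y i ≠ y j := by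
    rw [Ne, Prod.mk.injEq, not_and_or]
  have hS : (Uᵀ * H.val * U).IsHermitian := by
    have := isHermitian_coe (conjSym Uᵀ H)
    rwa [coe_conjSym, transpose_transpose] at this
  have hSx := commute_diagonal_iff.1 (commute_diagonal_transpose_conj hU hx)
  have hSy := commute_diagonal_iff.1 (commute_diagonal_transpose_conj hU hy)
  obtain ⟨V, hV, hV₀, w, hSV⟩ := exists_orthogonal_conj_diagonal_of_fibers
    (fun i => (x i, y i)) hS fun i j hij => ((hc i j).1 hij).elim (hSx i j) (hSy i j)
  have hVx : Commute (diagonal x) V :=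
    commute_diagonal_iff.2 fun i j hij => hV₀ i j ((hc i j).2 (.inl hij))
  have hVy : Commute (diagonal y) V :=
    commute_diagonal_iff.2 fun i j hij => hV₀ i j ((hc i j).2 (.inr hij))
  refine ⟨U * V, mul_mem hU hV, ?_, ?_, w, ?_⟩ <;> rw [← conjSym_conjDiag] <;> apply Subtype.ext
  · rw [coe_conjSym, coe_conjDiag, conj_diagonal_eq_self_of_commute hV hVx, coe_conjDiag]
  · rw [coe_conjSym, coe_conjDiag, conj_diagonal_eq_self_of_commute hV hVy, coe_conjDiag]
  · rw [coe_conjSym, coe_conjDiag, ← hSV, conj_transpose_conj hU]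

lemma exists_commutator_add (hU : U ∈ orthogonalGroup (Fin n) ℝ) (x : Fin n → ℝ) (H : Sym n) :
    ∃ (A : Matrix (Fin n) (Fin n) ℝ) (H₀ : Sym n), Aᵀ = -A ∧
      Commute (conjDiag U x).val H₀.val ∧
      H.val = A * (conjDiag U x).val - (conjDiag U x).val * A + H₀.val := by
  obtain ⟨B, S, hB, hS, hxS, hP⟩ := exists_commutator_diagonal_add x (conjSym Uᵀ H).2
  refine ⟨U * B * Uᵀ, conjSym U ⟨S, hS⟩, ?_, commute_conj_conj hU hxS, ?_⟩
  · rw [transpose_mul, transpose_mul, transpose_transpose, hB, Matrix.neg_mul, Matrix.mul_neg,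
      Matrix.mul_assoc]
  · rw [coe_conjSym, transpose_transpose] at hP
    rw [coe_conjSym, coe_conjDiag, conj_mul_conj hU, conj_mul_conj hU, ← Matrix.sub_mul,
      ← Matrix.mul_sub, ← Matrix.add_mul, ← Matrix.mul_add, ← hP, conj_transpose_conj hU]

end Decomposition

theorem twice_epi_diff_spectral_general {n : ℕ} {θ : (Fin n → ℝ) → EReal}
    {U : Matrix (Fin n) (Fin n) ℝ} {x y : Fin n → ℝ} (hθ : SymmetricFn θ)
    (hU : U ∈ orthogonalGroup (Fin n) ℝ)
    (hY : RegSubgrad ipM (specFn θ) (conjDiag U x) (conjDiag U y)) :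
    TwiceEpiDiff ipM (specFn θ) (conjDiag U x) (conjDiag U y) ↔ TwiceEpiDiff ipV θ x y := by
  have hfin : IsFiniteAt (specFn θ) (conjDiag U x) ↔ IsFiniteAt θ x := by
    rw [IsFiniteAt, specFn_conjDiag hθ hU, IsFiniteAt]
  have hXY : Commute (conjDiag U x).val (conjDiag U y).val :=
    commute_conj_conj hU (commute_diagonal x y)
  rw [twiceEpiDiff_iff, twiceEpiDiff_iff, hfin]
  refine and_congr_right fun hx => ⟨fun hg w => ?_, fun hf H => ?_⟩
  · exact (epiConvergesAt_sdq2_conjDiag_iff hθ hU hY).1 (hg _)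
  · obtain ⟨A, H₀, hA, hXH₀, hH⟩ := exists_commutator_add hU x H
    rw [epiConvergesAt_sdq2_specFn_iff_of_eq_commutator_add hθ (hfin.2 hx) hXY hA hH]
    by_cases hYH₀ : Commute (conjDiag U y).val H₀.val
    · obtain ⟨U', hU', hx', hy', w, rfl⟩ := exists_simultaneous_conjDiag hU hXH₀ hYH₀
      rw [← hx', ← hy'] at hY ⊢
      exact (epiConvergesAt_sdq2_conjDiag_iff hθ hU' hY).2 (hf w)
    · exact epiConvergesAt_of_lowerEpiLimit_eq_top
        (lowerEpiLimit_sdq2_specFn_eq_top_of_not_commute hθ hY hXY hXH₀ hYH₀)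

/-- Theorem 3.5, equivalence: `g = θ ∘ λ` is twice epi-differentiable at `X`
for `Y` if and only if `θ` is twice epi-differentiable at `λ(X)` for `y`. -/
theorem twice_epi_diff_spectral {n : ℕ} (θ : (Fin n → ℝ) → EReal)
    (X Y : Sym n) (U : Matrix (Fin n) (Fin n) ℝ) (y : Fin n → ℝ)
    (hsym : SymmetricFn θ) (hLip : LocLipRelDom ipV θ)
    (hlsc : LowerSemicontinuous (specFn θ))
    (hY : RegSubgrad ipM (specFn θ) X Y)
    (hy : RegSubgrad ipV θ (eigval X.val) y)
    (hU : U ∈ eigOrth X.val)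
    (hYdec : Y.val = U * Matrix.diagonal y * Uᵀ) :
    TwiceEpiDiff ipM (specFn θ) X Y ↔ TwiceEpiDiff ipV θ (eigval X.val) y := by
  have hXU : X = conjDiag U (eigval X.val) := Subtype.ext hU.2
  have hYU : Y = conjDiag U y := Subtype.ext hYdec
  generalize eigval X.val = x at hXU
  subst hXU hYU
  exact twice_epi_diff_spectral_general hsym ((mem_orthogonalGroup_iff _ ℝ).2 hU.1) hY

end SpecPaper
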